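/- Let p ≥ √3 and let u be a nonzero global Schwartz solution of the defocusing generalized KdV equation ∂_t u + ∂_x^3 u = ∂_x(|u|^{p-1} u). Then for every function x : ℝ → ℝ, sup_{t ∈ ℝ} ∫_ℝ |x − x(t)| (ρ(t,x) + e(t,x)) dx = ∞, where ρ(t,x) = u²(t,x) is the mass density and e(t,x) = ½ (∂_x u)²(t,x) + |u(t,x)|^{p+1}/(p+1) is the energy density. -/

import Mathlib

open MeasureTheory Real

/-!
Write `ρ = u²`, `∂_t ρ = ∂_x σ` and `∂_t e = ∂_x J`, and let `M`, `E` be the conserved integrals of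
`ρ` and `e`. For `ψ` a truncation of `x`, the quantity `E ∫ ψ ρ - M ∫ ψ e`, a renormalized
difference of the centres of mass and energy, has time derivative `M ∫ ψ' J - E ∫ ψ' σ`. It does not
change when a constant is added to `ψ`, so it is at most `M + E` times the moment of `ρ + e` about
any point. As `ψ → x`, the Cauchy-Schwarz inequality for the pairing of `u` with
`|u|^(p-1) u - √3 u_xx` gives, for `p ≥ √3`, the lower bound
`M ∫ J - E ∫ σ ≥ ½ (p - 1)² (∫ |u|^(p+1) / (p+1))²`. If the moment is bounded, the mass cannot
spread out and the right-hand side is bounded below; hence the difference of the centres grows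
linearly in time, which is absurd.

The decay of `u(t)` is not assumed to be locally uniform in `t`, so that even the conservation of
energy needs an argument. The times are split into countably many sets with uniform decay; along
each of these the localized identities can be differentiated, because `u` is locally Lipschitz in
time with values in `L²`.
-/

namespace GKdV

open Set Filter
open scoped Topology SchwartzMap ContDiff

/-! ### The power nonlinearity -/

/-- The power nonlinearity `|y|^(p-1) y`. -/
noncomputable def nonlin (p y : ℝ) : ℝ := |y| ^ (p - 1) * y

/-- The potential `|y|^(p+1) / (p+1)`, the primitive of `nonlin p`. -/
noncomputable def potential (p y : ℝ) : ℝ := |y| ^ (p + 1) / (p + 1)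

section Nonlinearity

variable {p : ℝ}

lemma hasDerivAt_potential (hp : 0 < p) (y : ℝ) : HasDerivAt (potential p) (nonlin p y) y := by
  refine ((hasDerivAt_abs_rpow y (by linarith : 1 < p + 1)).div_const (p + 1)).congr_deriv ?_
  rw [nonlin, show p + 1 - 2 = p - 1 by ring]
  field_simp

lemma hasDerivAt_nonlin (hp : 1 < p) (y : ℝ) :
    HasDerivAt (nonlin p) (p * |y| ^ (p - 1)) y := by
  rcases eq_or_ne y 0 with rfl | hy
  · have hcont : ContinuousAt (fun y : ℝ => |y| ^ (p - 1)) 0 :=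
      continuous_abs.continuousAt.rpow_const (Or.inr (by linarith))
    have hzero : |(0 : ℝ)| ^ (p - 1) = 0 := by rw [abs_zero, zero_rpow (by linarith)]
    rw [hzero, mul_zero, hasDerivAt_iff_tendsto_slope]
    refine (hzero ▸ hcont.tendsto.mono_left nhdsWithin_le_nhds).congr' ?_
    filter_upwards [self_mem_nhdsWithin] with z hz
    have hz : z ≠ 0 := hz
    simp [slope_def_field, nonlin, hz]
  · refine (((hasDerivAt_abs hy).rpow_const (p := p - 1) (Or.inl (abs_ne_zero.2 hy))).mul
      (hasDerivAt_id y)).congr_deriv ?_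
    have hrec : |y| ^ (p - 1 - 1) * |y| = |y| ^ (p - 1) := by
      rw [rpow_sub_one (abs_ne_zero.2 hy), div_mul_cancel₀ _ (abs_ne_zero.2 hy)]
    have hsign : (SignType.sign y : ℝ) * y = |y| := sign_mul_self y
    simp only [id, mul_one]
    linear_combination (p - 1) * |y| ^ (p - 1 - 1) * hsign + (p - 1) * hrec

@[fun_prop]
lemma continuous_nonlin (hp : 1 < p) : Continuous (nonlin p) :=
  continuous_iff_continuousAt.2 fun y => (hasDerivAt_nonlin hp y).continuousAt

lemma potential_nonneg (hp : 0 < p) (y : ℝ) : 0 ≤ potential p y := by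
  unfold potential; positivity

lemma mul_nonlin (hp : p + 1 ≠ 0) (y : ℝ) : y * nonlin p y = (p + 1) * potential p y := by
  rw [potential, mul_div_cancel₀ _ hp, nonlin]
  rcases eq_or_ne y 0 with rfl | hy
  · simp [zero_rpow hp]
  · rw [show p + 1 = p - 1 + (2 : ℕ) by push_cast; ring,
      rpow_add_natCast (abs_ne_zero.2 hy), sq_abs]
    ring

lemma abs_nonlin_le (hp : 1 ≤ p) {B y : ℝ} (hy : |y| ≤ B) : |nonlin p y| ≤ B ^ (p - 1) * |y| := by
  rw [nonlin, abs_mul, abs_of_nonneg (by positivity : (0 : ℝ) ≤ |y| ^ (p - 1))]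
  gcongr

lemma abs_nonlin_sub_le (hp : 1 < p) {B y z : ℝ} (hy : |y| ≤ B) (hz : |z| ≤ B) :
    |nonlin p y - nonlin p z| ≤ p * B ^ (p - 1) * |y - z| :=
  (convex_Icc (-B) B).norm_image_sub_le_of_norm_hasDerivWithin_le
    (fun x _ => (hasDerivAt_nonlin hp x).hasDerivWithinAt) (fun x hx => by
      have hx' : |x| ≤ B := abs_le.2 hx
      rw [norm_of_nonneg (by positivity)]
      gcongr) (abs_le.1 hz) (abs_le.1 hy)

lemma abs_potential_sub_le (hp : 1 ≤ p) {B r y z : ℝ} (hrB : r ≤ B) (hy : |y| ≤ r) (hz : |z| ≤ r) :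
    |potential p y - potential p z| ≤ B ^ (p - 1) * r * |y - z| :=
  (convex_Icc (-r) r).norm_image_sub_le_of_norm_hasDerivWithin_le
    (fun x _ => (hasDerivAt_potential (by linarith) x).hasDerivWithinAt) (fun x hx => by
      have hx' : |x| ≤ r := abs_le.2 hx
      refine (abs_nonlin_le hp (hx'.trans hrB)).trans ?_
      have : 0 ≤ B := (abs_nonneg x).trans (hx'.trans hrB)
      gcongr) (abs_le.1 hz) (abs_le.1 hy)

end Nonlinearity

/-! ### Tools from real analysis -/

lemma integral_abs_mul_abs_le_sqrt_mul_sqrt {α : Type*} [MeasurableSpace α] {μ : Measure α}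
    {f g : α → ℝ} (hf : MemLp f 2 μ) (hg : MemLp g 2 μ) :
    ∫ x, |f x| * |g x| ∂μ ≤ √(∫ x, f x ^ 2 ∂μ) * √(∫ x, g x ^ 2 ∂μ) := by
  have h := integral_mul_norm_le_Lp_mul_Lq (p := 2) (q := 2) (f := f) (g := g) (μ := μ)
    ⟨by norm_num, by norm_num, by norm_num⟩ (by simpa using hf) (by simpa using hg)
  simpa [sqrt_eq_rpow] using h

lemma sq_integral_mul_le {α : Type*} [MeasurableSpace α] {μ : Measure α}
    {f g : α → ℝ} (hf : MemLp f 2 μ) (hg : MemLp g 2 μ) :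
    (∫ x, f x * g x ∂μ) ^ 2 ≤ (∫ x, f x ^ 2 ∂μ) * ∫ x, g x ^ 2 ∂μ := by
  have h : |∫ x, f x * g x ∂μ| ≤ √(∫ x, f x ^ 2 ∂μ) * √(∫ x, g x ^ 2 ∂μ) :=
    (abs_integral_le_integral_abs.trans_eq (by simp only [abs_mul])).trans
      (integral_abs_mul_abs_le_sqrt_mul_sqrt hf hg)
  have hf0 : 0 ≤ ∫ x, f x ^ 2 ∂μ := integral_nonneg fun x => sq_nonneg _
  have hg0 : 0 ≤ ∫ x, g x ^ 2 ∂μ := integral_nonneg fun x => sq_nonneg _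
  calc (∫ x, f x * g x ∂μ) ^ 2 = |∫ x, f x * g x ∂μ| ^ 2 := (sq_abs _).symm
    _ ≤ (√(∫ x, f x ^ 2 ∂μ) * √(∫ x, g x ^ 2 ∂μ)) ^ 2 := by gcongr
    _ = _ := by rw [mul_pow, sq_sqrt hf0, sq_sqrt hg0]

/-- Unlike on a single set, a vanishing derivative is only required along each piece of a countable
cover: the image of each piece is null, while the image of an interval is an interval. -/
lemma eq_of_hasDerivWithinAt_zero_of_subset_iUnion {h : ℝ → ℝ} {a b : ℝ}
    (hcont : ContinuousOn h (uIcc a b)) {F : ℕ → Set ℝ} (hcover : uIcc a b ⊆ ⋃ n, F n)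
    (hderiv : ∀ n, ∀ t ∈ F n, HasDerivWithinAt h 0 (F n) t) : h a = h b := by
  have hnull : ∀ n, volume (h '' F n) = 0 := fun n =>
    addHaar_image_eq_zero_of_det_fderivWithin_eq_zero volume
      (f' := fun _ => ContinuousLinearMap.toSpanSingleton ℝ (0 : ℝ))
      (fun t ht => (hderiv n t ht).hasFDerivWithinAt) (fun t _ => by simp [ContinuousLinearMap.det])
  have himage : volume (h '' uIcc a b) = 0 :=
    measure_mono_null ((image_mono hcover).trans (image_iUnion).subset) (measure_iUnion_null hnull)
  have hlen := measure_mono_null (intermediate_value_uIcc hcont) himage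
  rw [Real.volume_interval, ENNReal.ofReal_eq_zero] at hlen
  exact (sub_eq_zero.1 (abs_nonpos_iff.1 hlen)).symm

lemma le_of_sq_le_mul_of_bddAbove {ι : Type*} {S : Set ι} {V : ι → ℝ} (hV : BddAbove (V '' S))
    {c : ℝ} (hc : 0 ≤ c) (h : ∀ m, (∀ i ∈ S, V i ≤ m) → ∀ i ∈ S, V i ^ 2 ≤ c * m) {i : ι}
    (hi : i ∈ S) : V i ≤ c := by
  set m := sSup (V '' S)
  have hm : ∀ i ∈ S, V i ≤ m := fun i hi => le_csSup hV (mem_image_of_mem V hi)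
  by_contra! hci
  have hm0 : 0 < m := (hc.trans_lt hci).trans_le (hm i hi)
  have hmc : m ≤ √(c * m) := csSup_le ⟨_, mem_image_of_mem V hi⟩ (by
    rintro _ ⟨j, hj, rfl⟩
    exact le_sqrt_of_sq_le (h m hm j hj))
  have hsq : m ^ 2 ≤ c * m := by
    simpa only [sq_sqrt (by positivity : (0 : ℝ) ≤ c * m)] using
      pow_le_pow_left₀ hm0.le hmc 2
  have := hm i hi
  nlinarith

/-! ### Decay classes -/

/-- Bounded continuous functions, the multipliers of `QuadDecay`. -/
@[fun_prop]
structure BddContinuous (z : ℝ → ℝ) : Prop where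
  continuous : Continuous z
  bounded : ∃ B, ∀ x, |z x| ≤ B

/-- Continuous functions that are `O((1 + x²)⁻¹)` on all of `ℝ`: everything that is built from a
Schwartz function and the merely `C¹` nonlinearity lies in this class, and it consists of integrable
functions. -/
@[fun_prop]
structure QuadDecay (g : ℝ → ℝ) : Prop where
  continuous : Continuous g
  bounded : ∃ B, ∀ x, (1 + x ^ 2) * |g x| ≤ B

namespace BddContinuous

variable {y z : ℝ → ℝ}

lemma exists_nonneg_bound (hz : BddContinuous z) : ∃ B, 0 ≤ B ∧ ∀ x, |z x| ≤ B :=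
  let ⟨B, hB⟩ := hz.bounded
  ⟨B, (abs_nonneg _).trans (hB 0), hB⟩

@[fun_prop]
lemma const (c : ℝ) : BddContinuous fun _ => c := ⟨continuous_const, |c|, fun _ => le_rfl⟩

@[fun_prop]
lemma neg (hz : BddContinuous z) : BddContinuous fun x => -z x :=
  ⟨hz.continuous.neg, by simpa only [abs_neg] using hz.bounded⟩

@[fun_prop]
lemma add (hy : BddContinuous y) (hz : BddContinuous z) : BddContinuous fun x => y x + z x :=
  let ⟨A, hA⟩ := hy.bounded
  let ⟨B, hB⟩ := hz.bounded
  ⟨hy.continuous.add hz.continuous, A + B,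
    fun x => (abs_add_le _ _).trans (add_le_add (hA x) (hB x))⟩

@[fun_prop]
lemma sub (hy : BddContinuous y) (hz : BddContinuous z) : BddContinuous fun x => y x - z x := by
  simpa only [sub_eq_add_neg] using hy.add hz.neg

@[fun_prop]
lemma mul (hy : BddContinuous y) (hz : BddContinuous z) : BddContinuous fun x => y x * z x :=
  let ⟨A, hA⟩ := hy.bounded
  let ⟨B, hB⟩ := hz.bounded
  ⟨hy.continuous.mul hz.continuous, A * B, fun x => by
    have hA0 : 0 ≤ A := (abs_nonneg _).trans (hA x)
    rw [abs_mul]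
    gcongr
    exacts [hA x, hB x]⟩

end BddContinuous

namespace QuadDecay

variable {g h z : ℝ → ℝ}

lemma inv_one_add_sq : QuadDecay fun x => (1 + x ^ 2)⁻¹ :=
  ⟨by fun_prop (disch := intro; positivity), 1, fun x => by
    rw [abs_of_pos (by positivity), mul_inv_cancel₀ (by positivity)]⟩

@[fun_prop]
lemma bddContinuous (hg : QuadDecay g) : BddContinuous g :=
  let ⟨B, hB⟩ := hg.bounded
  ⟨hg.continuous, B, fun x => le_trans (by nlinarith [sq_nonneg x, abs_nonneg (g x)]) (hB x)⟩

lemma abs_sub_mul (hg : QuadDecay g) (c : ℝ) : BddContinuous fun x => |x - c| * g x :=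
  let ⟨B, hB⟩ := hg.bounded
  ⟨by have := hg.continuous; fun_prop, (1 + |c|) * B, fun x => by
    have hx : |x - c| ≤ (1 + |c|) * (1 + x ^ 2) := by
      nlinarith [abs_sub x c, sq_nonneg (|x| - 1), sq_abs x, abs_nonneg c, sq_nonneg x,
        mul_nonneg (abs_nonneg c) (sq_nonneg x)]
    rw [abs_mul, abs_abs]
    calc |x - c| * |g x| ≤ (1 + |c|) * (1 + x ^ 2) * |g x| := by gcongr
      _ ≤ (1 + |c|) * B := by rw [mul_assoc]; gcongr; exact hB x⟩

@[fun_prop]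
lemma neg (hg : QuadDecay g) : QuadDecay fun x => -g x :=
  ⟨hg.continuous.neg, by simpa only [abs_neg] using hg.bounded⟩

@[fun_prop]
lemma add (hg : QuadDecay g) (hh : QuadDecay h) : QuadDecay fun x => g x + h x :=
  let ⟨A, hA⟩ := hg.bounded
  let ⟨B, hB⟩ := hh.bounded
  ⟨hg.continuous.add hh.continuous, A + B, fun x => by
    calc (1 + x ^ 2) * |g x + h x| ≤ (1 + x ^ 2) * (|g x| + |h x|) := by
          gcongr; exact abs_add_le _ _
      _ ≤ A + B := by rw [mul_add]; exact add_le_add (hA x) (hB x)⟩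

@[fun_prop]
lemma sub (hg : QuadDecay g) (hh : QuadDecay h) : QuadDecay fun x => g x - h x := by
  simpa only [sub_eq_add_neg] using hg.add hh.neg

@[fun_prop]
lemma mul (hz : BddContinuous z) (hg : QuadDecay g) : QuadDecay fun x => z x * g x :=
  let ⟨A, hA⟩ := hz.bounded
  let ⟨B, hB⟩ := hg.bounded
  ⟨hz.continuous.mul hg.continuous, A * B, fun x => by
    have hA0 : 0 ≤ A := (abs_nonneg _).trans (hA x)
    rw [abs_mul, mul_left_comm]
    gcongr
    exacts [hA x, hB x]⟩

@[fun_prop]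
lemma pow_two (hg : QuadDecay g) : QuadDecay fun x => g x ^ 2 := by
  simpa only [sq] using mul hg.bddContinuous hg

@[fun_prop]
lemma integrable (hg : QuadDecay g) : Integrable g := by
  obtain ⟨B, hB⟩ := hg.bounded
  refine (integrable_inv_one_add_sq.const_mul B).mono' hg.continuous.aestronglyMeasurable
    (Eventually.of_forall fun x => ?_)
  rw [← div_eq_mul_inv, le_div_iff₀' (by positivity)]
  exact hB x

lemma memLp_two (hg : QuadDecay g) : MemLp g 2 :=
  (memLp_two_iff_integrable_sq hg.continuous.aestronglyMeasurable).2 hg.pow_two.integrable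

@[fun_prop]
lemma nonlin {p : ℝ} (hp : 1 < p) (hg : QuadDecay g) : QuadDecay fun x => nonlin p (g x) := by
  obtain ⟨B, hB⟩ := hg.bddContinuous.bounded
  refine ⟨(continuous_nonlin hp).comp hg.continuous, ?_⟩
  obtain ⟨A, hA⟩ := (mul (BddContinuous.const (B ^ (p - 1))) hg).bounded
  refine ⟨A, fun x => le_trans ?_ (hA x)⟩
  have hB0 : 0 ≤ B := (abs_nonneg _).trans (hB x)
  rw [abs_mul, abs_of_nonneg (by positivity : 0 ≤ B ^ (p - 1))]
  exact mul_le_mul_of_nonneg_left (abs_nonlin_le hp.le (hB x)) (by positivity)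

@[fun_prop]
lemma potential {p : ℝ} (hp : 1 < p) (hg : QuadDecay g) : QuadDecay fun x => potential p (g x) := by
  have hp' : p + 1 ≠ 0 := by linarith
  have h : ∀ x, GKdV.potential p (g x) = (p + 1)⁻¹ * (g x * GKdV.nonlin p (g x)) := fun x => by
    rw [mul_nonlin hp', inv_mul_cancel_left₀ hp']
  simpa only [h] using mul (.const _) (mul hg.bddContinuous (hg.nonlin hp))

@[fun_prop]
lemma schwartz (v : 𝓢(ℝ, ℝ)) : QuadDecay fun x => v x := by
  obtain ⟨A, hA⟩ := v.decay 0 0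
  obtain ⟨B, hB⟩ := v.decay 2 0
  refine ⟨v.continuous, A + B, fun x => ?_⟩
  have := hA.2 x
  have := hB.2 x
  simp only [pow_zero, norm_iteratedFDeriv_zero, norm_eq_abs, sq_abs, one_mul] at *
  linarith

end QuadDecay

namespace BddContinuous

@[fun_prop]
lemma schwartz (v : 𝓢(ℝ, ℝ)) : BddContinuous fun x => v x := (QuadDecay.schwartz v).bddContinuous

@[fun_prop]
lemma nonlin {p : ℝ} (hp : 1 < p) (v : 𝓢(ℝ, ℝ)) : BddContinuous fun x => nonlin p (v x) :=
  (QuadDecay.nonlin hp (.schwartz v)).bddContinuous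

lemma of_hasCompactSupport {z : ℝ → ℝ} (hz : Continuous z) (hz' : HasCompactSupport z) :
    BddContinuous z :=
  ⟨hz, hz'.exists_bound_of_continuous hz⟩

end BddContinuous

/-- Integration by parts, with the boundary term `G` exhibited as a primitive of the difference. -/
lemma integral_eq_integral_of_hasDerivAt_sub {f g G : ℝ → ℝ} (hf : Integrable f) (hg : Integrable g)
    (hG : Integrable G) (h : ∀ x, HasDerivAt G (f x - g x) x) : ∫ x, f x = ∫ x, g x :=
  sub_eq_zero.1 <| integral_sub hf hg ▸
    integral_eq_zero_of_hasDerivAt_of_integrable h (hf.sub hg) hG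

/-! ### Cutoffs -/

/-- A smooth bump, equal to `1` on `[-1, 1]` and supported in `[-2, 2]`. -/
noncomputable def bump : ContDiffBump (0 : ℝ) := ⟨1, 2, one_pos, one_lt_two⟩

/-- The bump at scale `R`: equal to `1` on `[-R, R]` and supported in `[-2R, 2R]`. -/
noncomputable def cutoff (R x : ℝ) : ℝ := bump (R⁻¹ * x)

section Cutoff

variable {R x : ℝ}

lemma contDiff_cutoff (R : ℝ) : ContDiff ℝ ∞ (cutoff R) :=
  bump.contDiff.comp (contDiff_const.mul contDiff_id)

lemma cutoff_nonneg (R x : ℝ) : 0 ≤ cutoff R x := bump.nonneg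

lemma cutoff_le_one (R x : ℝ) : cutoff R x ≤ 1 := bump.le_one

lemma abs_cutoff_le_one (R x : ℝ) : |cutoff R x| ≤ 1 :=
  (abs_of_nonneg (cutoff_nonneg R x)).trans_le (cutoff_le_one R x)

lemma cutoff_eq_one (hx : |x| ≤ R) : cutoff R x = 1 := by
  refine bump.one_of_mem_closedBall ?_
  have hR : 0 ≤ R := (abs_nonneg x).trans hx
  rw [mem_closedBall_zero_iff, norm_eq_abs, abs_mul, abs_of_nonneg (inv_nonneg.2 hR)]
  exact (mul_le_mul_of_nonneg_left hx (inv_nonneg.2 hR)).trans inv_mul_le_one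

lemma cutoff_eq_zero (hR : 0 < R) (hx : 2 * R ≤ |x|) : cutoff R x = 0 := by
  refine bump.zero_of_le_dist ?_
  rw [dist_zero_right, norm_eq_abs, abs_mul, abs_of_pos (inv_pos.2 hR), le_inv_mul_iff₀ hR]
  exact (mul_comm _ _).trans_le hx

lemma hasCompactSupport_cutoff (hR : 0 < R) : HasCompactSupport (cutoff R) :=
  .intro (isCompact_Icc (a := -(2 * R)) (b := 2 * R)) fun x hx =>
    cutoff_eq_zero hR (by by_contra! h; exact hx (abs_le.1 h.le))

lemma deriv_cutoff_eq_zero (hx : |x| < R) : deriv (cutoff R) x = 0 := by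
  have : cutoff R =ᶠ[𝓝 x] fun _ => 1 := by
    filter_upwards [continuous_abs.continuousAt.eventually (gt_mem_nhds hx)] with y hy
    exact cutoff_eq_one hy.le
  rw [this.deriv_eq, deriv_const]

lemma exists_abs_deriv_cutoff_le : ∃ B, 1 ≤ B ∧ ∀ R, 1 ≤ R → ∀ x,
    |deriv (cutoff R) x| ≤ B / R ∧ |deriv (deriv (cutoff R)) x| ≤ B / R := by
  have hd : ContDiff ℝ ∞ (deriv bump) := (contDiff_infty_iff_deriv.1 bump.contDiff).2
  have hs : HasCompactSupport (deriv bump) := bump.hasCompactSupport.deriv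
  obtain ⟨B₁, hB₁⟩ := hs.exists_bound_of_continuous hd.continuous
  obtain ⟨B₂, hB₂⟩ := hs.deriv.exists_bound_of_continuous (hd.continuous_deriv (by simp))
  have h₁ : ∀ R, deriv (cutoff R) = fun x => R⁻¹ * deriv bump (R⁻¹ * x) := fun R =>
    funext fun x => deriv_comp_mul_left R⁻¹ bump x
  have h₂ : ∀ R x, deriv (deriv (cutoff R)) x = R⁻¹ * (R⁻¹ * deriv (deriv bump) (R⁻¹ * x)) :=
    fun R x => by
      rw [h₁, deriv_const_mul_field, deriv_comp_mul_left, smul_eq_mul]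
  refine ⟨max 1 (max B₁ B₂), le_max_left _ _, fun R hR x => ?_⟩
  have hR0 : 0 < R⁻¹ := by positivity
  have hB : ∀ y, |R⁻¹ * y| = |y| / R := fun y => by
    rw [abs_mul, abs_of_pos hR0, inv_mul_eq_div]
  rw [h₂, h₁, hB, hB, abs_mul, abs_of_pos hR0]
  constructor
  · gcongr
    exact (hB₁ _).trans (by simp)
  · gcongr
    exact (mul_le_of_le_one_left (abs_nonneg _) (inv_le_one_of_one_le₀ hR)).trans
      ((hB₂ _).trans (by simp))

lemma tendsto_integral_cutoff_mul {g : ℝ → ℝ} (hg : Integrable g) :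
    Tendsto (fun R => ∫ x, cutoff R x * g x) atTop (𝓝 (∫ x, g x)) := by
  refine tendsto_integral_filter_of_dominated_convergence (fun x => |g x|)
    (.of_forall fun R => (contDiff_cutoff R).continuous.aestronglyMeasurable.mul hg.1)
    (.of_forall fun R => .of_forall fun x => ?_) hg.abs (.of_forall fun x => ?_)
  · rw [norm_eq_abs, abs_mul]
    exact mul_le_of_le_one_left (abs_nonneg _) (abs_cutoff_le_one R x)
  · refine tendsto_const_nhds.congr' ?_
    filter_upwards [eventually_ge_atTop |x|] with R hR
    rw [cutoff_eq_one hR, one_mul]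

end Cutoff

/-! ### Local conservation laws -/

/-- The local conservation law `∂_t ρ = ∂_x σ`, in the classical sense. -/
structure ConservationLaw (ρ σ : ℝ → ℝ → ℝ) : Prop where
  continuous_density : Continuous fun q : ℝ × ℝ => ρ q.1 q.2
  continuous_flux : Continuous fun q : ℝ × ℝ => σ q.1 q.2
  exists_deriv : ∃ d : ℝ → ℝ → ℝ, Continuous (fun q : ℝ × ℝ => d q.1 q.2) ∧
    (∀ t x, HasDerivAt (fun s => ρ s x) (d t x) t) ∧ ∀ t x, HasDerivAt (σ t) (d t x) x

section CompactSupport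

variable {z : ℝ → ℝ} {f f' : ℝ → ℝ → ℝ}

lemma integrable_mul_of_hasCompactSupport {g : ℝ → ℝ} (hz : Continuous z)
    (hz' : HasCompactSupport z) (hg : Continuous g) : Integrable fun x => z x * g x :=
  (hz.mul hg).integrable_of_hasCompactSupport hz'.mul_right

lemma continuous_integral_mul (hz : Continuous z) (hz' : HasCompactSupport z)
    (hf : Continuous fun q : ℝ × ℝ => f q.1 q.2) : Continuous fun t => ∫ x, z x * f t x := by
  have h : ∀ t, ∫ x, z x * f t x = ∫ x in tsupport z, z x * f t x := fun t =>
    (setIntegral_eq_integral_of_forall_compl_eq_zero fun x hx => by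
      rw [image_eq_zero_of_notMem_tsupport hx, zero_mul]).symm
  simp_rw [h]
  exact continuous_parametric_integral_of_continuous ((hz.comp continuous_snd).mul hf) hz'

lemma hasDerivAt_integral_mul (hz : Continuous z) (hz' : HasCompactSupport z)
    (hf : Continuous fun q : ℝ × ℝ => f q.1 q.2) (hf' : Continuous fun q : ℝ × ℝ => f' q.1 q.2)
    (hd : ∀ t x, HasDerivAt (fun s => f s x) (f' t x) t) (t : ℝ) :
    HasDerivAt (fun s => ∫ x, z x * f s x) (∫ x, z x * f' t x) t := by
  obtain ⟨K, hK⟩ :=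
    ((isCompact_Icc (a := t - 1) (b := t + 1)).prod hz').exists_bound_of_continuousOn
    hf'.continuousOn
  have hslice : ∀ {g : ℝ → ℝ → ℝ}, Continuous (fun q : ℝ × ℝ => g q.1 q.2) →
      ∀ s, Continuous (g s) :=
    fun hg s => hg.comp (by fun_prop : Continuous fun x : ℝ => (s, x))
  refine (hasDerivAt_integral_of_dominated_loc_of_deriv_le (s := Icc (t - 1) (t + 1))
    (bound := fun x => |z x| * K) (Icc_mem_nhds (by linarith) (by linarith))
    (.of_forall fun s => (hz.mul (hslice hf s)).aestronglyMeasurable)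
    (integrable_mul_of_hasCompactSupport hz hz' (hslice hf t))
    (hz.mul (hslice hf' t)).aestronglyMeasurable (.of_forall fun x s hs => ?_) ?_
    (.of_forall fun x s _ => (hd s x).const_mul _)).2
  · rw [norm_mul, norm_eq_abs]
    by_cases hx : x ∈ tsupport z
    · gcongr
      exact hK (s, x) ⟨hs, hx⟩
    · simp [image_eq_zero_of_notMem_tsupport hx]
  · exact (hz.integrable_of_hasCompactSupport hz').abs.mul_const K

end CompactSupport

namespace ConservationLaw

variable {ρ σ : ℝ → ℝ → ℝ} {z : ℝ → ℝ}

lemma continuous_density_apply (h : ConservationLaw ρ σ) (t : ℝ) : Continuous (ρ t) :=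
  h.continuous_density.comp (by fun_prop : Continuous fun x : ℝ => (t, x))

lemma continuous_flux_apply (h : ConservationLaw ρ σ) (t : ℝ) : Continuous (σ t) :=
  h.continuous_flux.comp (by fun_prop : Continuous fun x : ℝ => (t, x))

lemma continuous_integral_mul_flux (h : ConservationLaw ρ σ) (hz : Continuous z)
    (hz' : HasCompactSupport z) : Continuous fun t => ∫ x, z x * σ t x :=
  continuous_integral_mul hz hz' h.continuous_flux

lemma integral_mul_sub (h : ConservationLaw ρ σ) (hz : ContDiff ℝ 1 z) (hz' : HasCompactSupport z)
    (a b : ℝ) :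
    (∫ x, z x * ρ b x) - ∫ x, z x * ρ a x = -∫ t in a..b, ∫ x, deriv z x * σ t x := by
  obtain ⟨d, hd, hρ, hσ⟩ := h.exists_deriv
  have hslice : ∀ t, Continuous (d t) := fun t =>
    hd.comp (by fun_prop : Continuous fun x : ℝ => (t, x))
  rw [← intervalIntegral.integral_eq_sub_of_hasDerivAt
    (fun t _ => hasDerivAt_integral_mul hz.continuous hz' h.continuous_density hd hρ t)
    ((continuous_integral_mul hz.continuous hz' hd).intervalIntegrable _ _),
    ← intervalIntegral.integral_neg]
  refine intervalIntegral.integral_congr fun t _ => ?_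
  exact integral_mul_deriv_eq_deriv_mul_of_integrable
    (fun x _ => (hz.differentiable one_ne_zero x).hasDerivAt) (fun x _ => hσ t x)
    (integrable_mul_of_hasCompactSupport hz.continuous hz' (hslice t))
    (integrable_mul_of_hasCompactSupport (hz.continuous_deriv le_rfl) hz'.deriv
      (h.continuous_flux_apply t))
    (integrable_mul_of_hasCompactSupport hz.continuous hz' (h.continuous_flux_apply t))

end ConservationLaw

/-- Bounded `C¹` weights whose derivative has compact support: the functions against which a
conservation law may be tested without decay of the flux. -/
structure IsWeight (ψ : ℝ → ℝ) : Prop where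
  contDiff : ContDiff ℝ 1 ψ
  bounded : ∃ B, ∀ x, |ψ x| ≤ B
  hasCompactSupport_deriv : HasCompactSupport (deriv ψ)

namespace IsWeight

variable {ψ : ℝ → ℝ} (hψ : IsWeight ψ)

lemma const (c : ℝ) : IsWeight fun _ => c :=
  ⟨contDiff_const, ⟨|c|, fun _ => le_rfl⟩, by
    simpa using HasCompactSupport.of_support_subset_isCompact isCompact_empty (by simp)⟩

include hψ

lemma bddContinuous : BddContinuous ψ := ⟨hψ.contDiff.continuous, hψ.bounded⟩

lemma continuous_deriv : Continuous (deriv ψ) := hψ.contDiff.continuous_deriv le_rfl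

lemma hasDerivAt (x : ℝ) : HasDerivAt ψ (deriv ψ x) x :=
  (hψ.contDiff.differentiable one_ne_zero x).hasDerivAt

lemma bddContinuous_deriv : BddContinuous (deriv ψ) :=
  .of_hasCompactSupport hψ.continuous_deriv hψ.hasCompactSupport_deriv

lemma eventually_cutoff_mul_deriv : ∀ᶠ R in atTop, ∀ x, cutoff R x * deriv ψ x = deriv ψ x := by
  obtain ⟨L, hL⟩ := hψ.hasCompactSupport_deriv.isBounded.exists_norm_le
  filter_upwards [eventually_ge_atTop L] with R hR x
  by_cases hx : x ∈ tsupport (deriv ψ)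
  · rw [cutoff_eq_one ((hL x hx).trans hR), one_mul]
  · rw [image_eq_zero_of_notMem_tsupport hx, mul_zero]

lemma exists_abs_mul_deriv_cutoff_le : ∃ B, ∀ R, 1 ≤ R → ∀ x,
    |ψ x * deriv (cutoff R) x| ≤ B / R ∧ |deriv (fun y => ψ y * deriv (cutoff R) y) x| ≤ B / R := by
  obtain ⟨A, hA0, hA⟩ := hψ.bddContinuous.exists_nonneg_bound
  obtain ⟨A', hA'0, hA'⟩ := hψ.bddContinuous_deriv.exists_nonneg_bound
  obtain ⟨B, hB1, hB⟩ := exists_abs_deriv_cutoff_le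
  refine ⟨(A + A') * B, fun R hR x => ?_⟩
  have hBR : 0 ≤ B / R := by positivity
  have hχ : HasDerivAt (deriv (cutoff R)) (deriv (deriv (cutoff R)) x) x :=
    (((contDiff_infty_iff_deriv.1 (contDiff_cutoff R)).2).differentiable (by simp) x).hasDerivAt
  rw [((hψ.hasDerivAt x).fun_mul hχ).deriv, mul_div_assoc, add_mul]
  obtain ⟨h₁, h₂⟩ := hB R hR x
  constructor
  · rw [abs_mul]
    nlinarith [mul_le_mul (hA x) h₁ (abs_nonneg _) hA0]
  · refine (abs_add_le _ _).trans ?_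
    rw [abs_mul, abs_mul, add_comm]
    exact add_le_add (mul_le_mul (hA x) h₂ (abs_nonneg _) hA0)
      (mul_le_mul (hA' x) h₁ (abs_nonneg _) hA'0)

end IsWeight

namespace ConservationLaw

variable {ρ σ : ℝ → ℝ → ℝ} {ψ : ℝ → ℝ}

lemma eventually_integral_cutoff_mul_sub (h : ConservationLaw ρ σ) (hψ : IsWeight ψ) :
    ∀ᶠ R in atTop, ∀ a b,
      (∫ x, cutoff R x * (ψ x * ρ b x)) - ∫ x, cutoff R x * (ψ x * ρ a x) =
        -(∫ t in a..b, ∫ x, ψ x * deriv (cutoff R) x * σ t x)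
          - ∫ t in a..b, ∫ x, deriv ψ x * σ t x := by
  filter_upwards [hψ.eventually_cutoff_mul_deriv, eventually_gt_atTop 0] with R hR hR0 a b
  have hχ := (contDiff_cutoff R).of_le (m := 1) (by simp)
  have hχs := hasCompactSupport_cutoff hR0
  have hψχ : Continuous fun x => ψ x * deriv (cutoff R) x :=
    hψ.contDiff.continuous.mul (hχ.continuous_deriv le_rfl)
  have hψχs : HasCompactSupport fun x => ψ x * deriv (cutoff R) x := hχs.deriv.mul_left
  have hderiv : ∀ x, deriv (fun y => cutoff R y * ψ y) x = ψ x * deriv (cutoff R) x + deriv ψ x :=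
    fun x => by
      rw [((hχ.differentiable one_ne_zero x).hasDerivAt.fun_mul (hψ.hasDerivAt x)).deriv, hR,
        mul_comm (ψ x)]
  have hlaw := h.integral_mul_sub (hχ.mul hψ.contDiff) hχs.mul_right a b
  simp only [hderiv, add_mul, mul_assoc (cutoff R _)] at hlaw
  rw [hlaw, ← neg_add', ← intervalIntegral.integral_add
    ((h.continuous_integral_mul_flux hψχ hψχs).intervalIntegrable _ _)
    ((h.continuous_integral_mul_flux hψ.continuous_deriv
      hψ.hasCompactSupport_deriv).intervalIntegrable _ _)]
  refine congrArg Neg.neg (intervalIntegral.integral_congr fun t _ => ?_)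
  exact integral_add
    (integrable_mul_of_hasCompactSupport hψχ hψχs (h.continuous_flux_apply t))
    (integrable_mul_of_hasCompactSupport hψ.continuous_deriv hψ.hasCompactSupport_deriv
      (h.continuous_flux_apply t))

lemma integral_weight_mul_sub (h : ConservationLaw ρ σ) (hψ : IsWeight ψ)
    (hρ : ∀ t, Integrable fun x => ψ x * ρ t x) {a b C : ℝ}
    (hflux : ∀ R, 1 ≤ R → ∀ t ∈ uIcc a b, |∫ x, ψ x * deriv (cutoff R) x * σ t x| ≤ C / R) :
    (∫ x, ψ x * ρ b x) - ∫ x, ψ x * ρ a x = -∫ t in a..b, ∫ x, deriv ψ x * σ t x := by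
  have hescape :
      Tendsto (fun R => ∫ t in a..b, ∫ x, ψ x * deriv (cutoff R) x * σ t x) atTop (𝓝 0) := by
    refine squeeze_zero_norm' ?_ (by simpa using (tendsto_const_nhds.div_atTop tendsto_id :
      Tendsto (fun R : ℝ => C * |b - a| / R) atTop (𝓝 0)))
    filter_upwards [eventually_ge_atTop 1] with R hR
    rw [mul_div_right_comm]
    exact intervalIntegral.norm_integral_le_of_norm_le_const fun t ht =>
      hflux R hR t (uIoc_subset_uIcc ht)
  refine tendsto_nhds_unique
    ((tendsto_integral_cutoff_mul (hρ b)).sub (tendsto_integral_cutoff_mul (hρ a))) ?_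
  have hlim := hescape.neg.sub_const (∫ t in a..b, ∫ x, deriv ψ x * σ t x)
  rw [neg_zero, zero_sub] at hlim
  refine hlim.congr' ?_
  filter_upwards [h.eventually_integral_cutoff_mul_sub hψ] with R hR using (hR a b).symm

end ConservationLaw

local notation "∂" => SchwartzMap.derivCLM ℝ ℝ

/-! ### Densities and fluxes at a fixed time -/

/-- The `L²` gradient `-v'' + |v|^(p-1) v` of the energy. -/
noncomputable def energyGrad (p : ℝ) (v : 𝓢(ℝ, ℝ)) (x : ℝ) : ℝ := -∂ (∂ v) x + nonlin p (v x)

/-- The derivative of `energyGrad p v`; the generalized KdV equation reads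
`∂_t u = velocity p u`. -/
noncomputable def velocity (p : ℝ) (v : 𝓢(ℝ, ℝ)) (x : ℝ) : ℝ :=
  -∂ (∂ (∂ v)) x + p * |v x| ^ (p - 1) * ∂ v x

/-- The energy density `½ v'² + |v|^(p+1)/(p+1)`. -/
noncomputable def energyDensity (p : ℝ) (v : 𝓢(ℝ, ℝ)) (x : ℝ) : ℝ :=
  1 / 2 * ∂ v x ^ 2 + potential p (v x)

/-- The sum of the mass density `v²` and the energy density. -/
noncomputable def density (p : ℝ) (v : 𝓢(ℝ, ℝ)) (x : ℝ) : ℝ := v x ^ 2 + energyDensity p v x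

/-- The flux of the mass: `∂_t (u²) = ∂_x (massFlux p u)` along the flow. -/
noncomputable def massFlux (p : ℝ) (v : 𝓢(ℝ, ℝ)) (x : ℝ) : ℝ :=
  2 * (v x * energyGrad p v x) + ∂ v x ^ 2 - 2 * potential p (v x)

/-- The flux of the energy: `∂_t (energyDensity p u) = ∂_x (energyFlux p u)` along the flow. -/
noncomputable def energyFlux (p : ℝ) (v : 𝓢(ℝ, ℝ)) (x : ℝ) : ℝ :=
  ∂ v x * velocity p v x + 1 / 2 * energyGrad p v x ^ 2

section FixedTime

variable {p : ℝ} (v : 𝓢(ℝ, ℝ)) {z : ℝ → ℝ}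

lemma hasDerivAt_schwartz (x : ℝ) : HasDerivAt v (∂ v x) x := v.hasDerivAt x

lemma hasDerivAt_energyGrad (hp : 1 < p) (x : ℝ) :
    HasDerivAt (energyGrad p v) (velocity p v x) x :=
  (hasDerivAt_schwartz (∂ (∂ v)) x).neg.add
    ((hasDerivAt_nonlin hp (v x)).comp x (hasDerivAt_schwartz v x))

lemma hasDerivAt_potential_comp (hp : 0 < p) (x : ℝ) :
    HasDerivAt (fun y => potential p (v y)) (nonlin p (v x) * ∂ v x) x :=
  (hasDerivAt_potential hp (v x)).comp x (hasDerivAt_schwartz v x)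

lemma hasDerivAt_massFlux (hp : 1 < p) (x : ℝ) :
    HasDerivAt (massFlux p v) (2 * (v x * velocity p v x)) x := by
  refine ((((hasDerivAt_schwartz v x).fun_mul (hasDerivAt_energyGrad v hp x)).const_mul
    2).fun_add ((hasDerivAt_schwartz (∂ v) x).fun_pow 2) |>.fun_sub
    ((hasDerivAt_potential_comp v (by linarith) x).const_mul 2)).congr_deriv ?_
  unfold energyGrad
  push_cast
  ring

@[fun_prop]
lemma QuadDecay.energyGrad (hp : 1 < p) : QuadDecay fun x => energyGrad p v x := by
  unfold GKdV.energyGrad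
  fun_prop (disch := assumption)

lemma BddContinuous.energyGrad (hp : 1 < p) : BddContinuous fun x => energyGrad p v x :=
  (QuadDecay.energyGrad v hp).bddContinuous

@[fun_prop]
lemma QuadDecay.velocity (hp : 1 < p) : QuadDecay fun x => velocity p v x := by
  obtain ⟨B, hB⟩ := (BddContinuous.schwartz v).bounded
  have hpow : BddContinuous fun x => |v x| ^ (p - 1) :=
    ⟨v.continuous.abs.rpow_const fun _ => .inr (by linarith), B ^ (p - 1), fun x => by
      rw [abs_of_nonneg (by positivity)]
      gcongr
      exact hB x⟩
  unfold GKdV.velocity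
  fun_prop

@[fun_prop]
lemma QuadDecay.energyDensity (hp : 1 < p) : QuadDecay fun x => energyDensity p v x := by
  unfold GKdV.energyDensity
  fun_prop (disch := assumption)

@[fun_prop]
lemma QuadDecay.density (hp : 1 < p) : QuadDecay fun x => density p v x := by
  unfold GKdV.density
  fun_prop (disch := assumption)

@[fun_prop]
lemma QuadDecay.massFlux (hp : 1 < p) : QuadDecay fun x => massFlux p v x := by
  unfold GKdV.massFlux
  fun_prop (disch := assumption)

@[fun_prop]
lemma QuadDecay.energyFlux (hp : 1 < p) : QuadDecay fun x => energyFlux p v x := by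
  unfold GKdV.energyFlux
  fun_prop (disch := assumption)

lemma energyDensity_nonneg (hp : 0 < p) (x : ℝ) : 0 ≤ energyDensity p v x :=
  add_nonneg (by positivity) (potential_nonneg hp _)

lemma density_nonneg (hp : 0 < p) (x : ℝ) : 0 ≤ density p v x :=
  add_nonneg (sq_nonneg _) (energyDensity_nonneg v hp x)

lemma integral_mul_massFlux (hp : 1 < p) (hz : ContDiff ℝ 1 z) (hz₀ : BddContinuous z)
    (hz₁ : BddContinuous (deriv z)) :
    ∫ x, z x * massFlux p v x =
      ∫ x, z x * (3 * ∂ v x ^ 2 + 2 * p * potential p (v x)) + 2 * deriv z x * (v x * ∂ v x) := by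
  refine integral_eq_integral_of_hasDerivAt_sub (G := fun x => -2 * z x * (v x * ∂ v x))
    (QuadDecay.integrable (by fun_prop (disch := assumption)))
    (QuadDecay.integrable (by fun_prop (disch := assumption)))
    (QuadDecay.integrable (by fun_prop (disch := assumption))) fun x => ?_
  refine (((hz.differentiable one_ne_zero x).hasDerivAt.const_mul (-2)).fun_mul
    ((hasDerivAt_schwartz v x).fun_mul (hasDerivAt_schwartz (∂ v) x))).congr_deriv ?_
  have h := mul_nonlin (by linarith : p + 1 ≠ 0) (v x)
  unfold massFlux energyGrad
  linear_combination -2 * z x * h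

lemma abs_integral_mul_massFlux_le (hp : 1 < p) (hz : ContDiff ℝ 1 z) {ε : ℝ}
    (hz₀ : ∀ x, |z x| ≤ ε) (hz₁ : ∀ x, |deriv z x| ≤ ε) :
    |∫ x, z x * massFlux p v x| ≤ (8 + 2 * p) * ε * ∫ x, density p v x := by
  rw [integral_mul_massFlux v hp hz ⟨hz.continuous, ε, hz₀⟩ ⟨hz.continuous_deriv le_rfl, ε, hz₁⟩,
    ← integral_const_mul, ← norm_eq_abs]
  refine norm_integral_le_of_norm_le ((QuadDecay.density v hp).integrable.const_mul _)
    (.of_forall fun x => ?_)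
  have hF := potential_nonneg (by linarith : 0 < p) (v x)
  have hε : 0 ≤ ε := (abs_nonneg _).trans (hz₀ x)
  calc ‖z x * (3 * ∂ v x ^ 2 + 2 * p * potential p (v x)) + 2 * deriv z x * (v x * ∂ v x)‖
      ≤ |z x| * (3 * ∂ v x ^ 2 + 2 * p * potential p (v x))
        + |deriv z x| * (2 * |v x| * |∂ v x|) := by
        refine (norm_add_le _ _).trans_eq ?_
        simp only [norm_eq_abs, abs_mul, abs_two]
        rw [abs_of_nonneg (by positivity : 0 ≤ 3 * ∂ v x ^ 2 + 2 * p * potential p (v x))]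
        ring
    _ ≤ ε * (3 * ∂ v x ^ 2 + 2 * p * potential p (v x)) + ε * (v x ^ 2 + ∂ v x ^ 2) := by
        gcongr
        · exact hz₀ x
        · exact hz₁ x
        · rw [← sq_abs (v x), ← sq_abs (∂ v x)]
          exact two_mul_le_add_sq _ _
    _ ≤ (8 + 2 * p) * ε * density p v x := by
        rw [← mul_add, mul_comm _ ε, mul_assoc ε]
        refine mul_le_mul_of_nonneg_left ?_ hε
        unfold density energyDensity
        nlinarith [mul_nonneg (by linarith : 0 ≤ p) (sq_nonneg (v x)),
          mul_nonneg (by linarith : 0 ≤ p) (sq_nonneg (∂ v x)), sq_nonneg (v x), sq_nonneg (∂ v x)]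

lemma integral_mul_energyFlux (hp : 1 < p) (hz : ContDiff ℝ 2 z) (hz₀ : BddContinuous z)
    (hz₁ : BddContinuous (deriv z)) (hz₂ : BddContinuous (deriv (deriv z))) :
    ∫ x, z x * energyFlux p v x =
      ∫ x, z x * (3 / 2 * ∂ (∂ v) x ^ 2 - 2 * ∂ (∂ v) x * nonlin p (v x)
          + 1 / 2 * nonlin p (v x) ^ 2)
        + deriv (deriv z) x * (potential p (v x) - 1 / 2 * ∂ v x ^ 2) := by
  have := BddContinuous.energyGrad v hp
  refine integral_eq_integral_of_hasDerivAt_sub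
    (G := fun x => z x * (∂ v x * energyGrad p v x)
      - deriv z x * (potential p (v x) - 1 / 2 * ∂ v x ^ 2))
    (QuadDecay.integrable (by fun_prop (disch := assumption)))
    (QuadDecay.integrable (by fun_prop (disch := assumption)))
    (QuadDecay.integrable (by fun_prop (disch := assumption))) fun x => ?_
  have hz' := (contDiff_succ_iff_deriv (n := 1).1 hz).2.2
  refine (((hz.differentiable two_ne_zero x).hasDerivAt.fun_mul
    ((hasDerivAt_schwartz (∂ v) x).fun_mul (hasDerivAt_energyGrad v hp x))).fun_sub
    ((hz'.differentiable one_ne_zero x).hasDerivAt.fun_mul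
      ((hasDerivAt_potential_comp v (by linarith) x).fun_sub
        (((hasDerivAt_schwartz (∂ v) x).fun_pow 2).const_mul (1 / 2))))).congr_deriv ?_
  unfold energyFlux energyGrad
  push_cast
  ring

lemma sq_le_two_mul_integral_density (hp : 1 < p) (x : ℝ) :
    v x ^ 2 ≤ 2 * ∫ y, density p v y := by
  have hderiv : ∀ y, HasDerivAt (fun y => v y ^ 2) (2 * (v y * ∂ v y)) y := fun y =>
    ((hasDerivAt_schwartz v y).fun_pow 2).congr_deriv (by push_cast; ring)
  have hint : Integrable fun y => 2 * (v y * ∂ v y) := QuadDecay.integrable (by fun_prop)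
  have hsq : Integrable fun y => v y ^ 2 := QuadDecay.integrable (by fun_prop)
  calc v x ^ 2 = ∫ y in Iic x, 2 * (v y * ∂ v y) := by
        rw [integral_Iic_of_hasDerivAt_of_tendsto' (fun y _ => hderiv y) hint.integrableOn
          (tendsto_zero_of_hasDerivAt_of_integrableOn_Iic (a := x) (fun y _ => hderiv y)
            hint.integrableOn hsq.integrableOn), sub_zero]
    _ ≤ ∫ y in Iic x, |2 * (v y * ∂ v y)| :=
        integral_mono hint.integrableOn hint.abs.integrableOn fun y => le_abs_self _
    _ ≤ ∫ y, |2 * (v y * ∂ v y)| :=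
        setIntegral_le_integral hint.abs (.of_forall fun y => abs_nonneg _)
    _ ≤ ∫ y, 2 * density p v y := by
        refine integral_mono hint.abs ((QuadDecay.density v hp).integrable.const_mul 2) fun y => ?_
        have hF := potential_nonneg (by linarith : 0 < p) (v y)
        simp only [density, energyDensity]
        rw [abs_le]
        constructor <;>
          nlinarith [sq_nonneg (v y + ∂ v y), sq_nonneg (v y - ∂ v y), sq_nonneg (v y)]
    _ = _ := integral_const_mul _ _

end FixedTime

/-- A quantitative form of membership in the Schwartz class: `N (1 + x²)⁻¹` dominates `v` and its
first two derivatives. -/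
def DecayBound (N : ℝ) (v : 𝓢(ℝ, ℝ)) : Prop :=
  ∀ x, |v x| ≤ N * (1 + x ^ 2)⁻¹ ∧ |∂ v x| ≤ N * (1 + x ^ 2)⁻¹ ∧ |∂ (∂ v) x| ≤ N * (1 + x ^ 2)⁻¹

lemma exists_nat_decayBound (v : 𝓢(ℝ, ℝ)) : ∃ n : ℕ, DecayBound n v := by
  obtain ⟨A, hA⟩ := (QuadDecay.schwartz v).bounded
  obtain ⟨B, hB⟩ := (QuadDecay.schwartz (∂ v)).bounded
  obtain ⟨C, hC⟩ := (QuadDecay.schwartz (∂ (∂ v))).bounded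
  obtain ⟨n, hn⟩ := exists_nat_ge (max A (max B C))
  simp only [max_le_iff] at hn
  refine ⟨n, fun x => ?_⟩
  simp only [← div_eq_mul_inv, le_div_iff₀' (by positivity : 0 < 1 + x ^ 2)]
  exact ⟨(hA x).trans hn.1, (hB x).trans hn.2.1, (hC x).trans hn.2.2⟩

section TailEstimate

variable {p : ℝ} {v w : 𝓢(ℝ, ℝ)} {θ : ℝ → ℝ}

lemma integral_mul_energyDensity_sub (hp : 1 < p) (v w : 𝓢(ℝ, ℝ)) (hθ : ContDiff ℝ 1 θ)
    (hθ₀ : BddContinuous θ) (hθ₁ : BddContinuous (deriv θ)) :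
    ∫ x, θ x * (energyDensity p v x - energyDensity p w x) =
      ∫ x, θ x * (potential p (v x) - potential p (w x))
        - 1 / 2 * (deriv θ x * (∂ v x + ∂ w x) + θ x * (∂ (∂ v) x + ∂ (∂ w) x)) * (v x - w x) := by
  refine integral_eq_integral_of_hasDerivAt_sub
    (G := fun x => 1 / 2 * (θ x * (∂ v x + ∂ w x)) * (v x - w x))
    (QuadDecay.integrable (by fun_prop (disch := assumption)))
    (QuadDecay.integrable (by fun_prop (disch := assumption)))
    (QuadDecay.integrable (by fun_prop)) fun x => ?_
  refine ((((hθ.differentiable one_ne_zero x).hasDerivAt.fun_mul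
    ((hasDerivAt_schwartz (∂ v) x).fun_add
      (hasDerivAt_schwartz (∂ w) x))).const_mul (1 / 2)).fun_mul
    ((hasDerivAt_schwartz v x).fun_sub (hasDerivAt_schwartz w x))).congr_deriv ?_
  unfold energyDensity
  ring

lemma memLp_two_id_mul_inv_one_add_sq : MemLp (fun x : ℝ => x * (1 + x ^ 2)⁻¹) 2 := by
  have hcont : Continuous fun x : ℝ => x * (1 + x ^ 2)⁻¹ :=
    continuous_id.mul
      ((by fun_prop : Continuous fun x : ℝ => 1 + x ^ 2).inv₀ fun x => by positivity)
  refine (memLp_two_iff_integrable_sq hcont.aestronglyMeasurable).2 ?_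
  refine integrable_inv_one_add_sq.mono' (hcont.pow 2).aestronglyMeasurable (.of_forall fun x => ?_)
  rw [norm_of_nonneg (sq_nonneg _), mul_pow, inv_pow, ← div_eq_mul_inv, div_le_iff₀ (by positivity),
    pow_two (1 + x ^ 2), inv_mul_cancel_left₀ (by positivity)]
  linarith

lemma abs_integrand_energyDensity_sub_le (hp : 1 ≤ p) {N : ℝ} (hv : DecayBound N v)
    (hw : DecayBound N w) {ε x : ℝ} (hε₀ : |θ x| ≤ ε * |x|) (hε₁ : |deriv θ x| ≤ ε * |x|) :
    |θ x * (potential p (v x) - potential p (w x))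
        - 1 / 2 * (deriv θ x * (∂ v x + ∂ w x) + θ x * (∂ (∂ v) x + ∂ (∂ w) x)) * (v x - w x)|
      ≤ N * (N ^ (p - 1) + 2) * ε * (|x * (1 + x ^ 2)⁻¹| * |v x - w x|) := by
  have hN : 0 ≤ N := by simpa using (abs_nonneg _).trans (hv 0).1
  have hε : 0 ≤ ε * |x| := (abs_nonneg _).trans hε₀
  set r := N * (1 + x ^ 2)⁻¹ with hr
  have hrN : r ≤ N := mul_le_of_le_one_right hN
    (inv_le_one_of_one_le₀ (le_add_of_nonneg_right (sq_nonneg x)))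
  have hF := abs_potential_sub_le hp hrN (hv x).1 (hw x).1
  calc _ ≤ |θ x| * |potential p (v x) - potential p (w x)| + 1 / 2 * (|deriv θ x| *
          (|∂ v x| + |∂ w x|) + |θ x| * (|∂ (∂ v) x| + |∂ (∂ w) x|)) * |v x - w x| := by
        refine (abs_sub _ _).trans ?_
        simp only [abs_mul]
        rw [abs_of_pos (by norm_num : (0 : ℝ) < 1 / 2)]
        gcongr
        refine (abs_add_le _ _).trans ?_
        rw [abs_mul, abs_mul]
        gcongr <;> exact abs_add_le _ _
    _ ≤ ε * |x| * (N ^ (p - 1) * r * |v x - w x|) + 1 / 2 * (ε * |x| * (r + r)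
          + ε * |x| * (r + r)) * |v x - w x| := by
        gcongr
        exacts [(hv x).2.1, (hw x).2.1, (hv x).2.2, (hw x).2.2]
    _ = _ := by
        rw [abs_mul, abs_of_pos (by positivity : 0 < (1 + x ^ 2)⁻¹), hr]
        ring

/-- Only the energies of the two functions, not their difference, are known to decay, so the tail is
gained from the weight `|x| (1 + x²)⁻¹ ∈ L²`. -/
lemma exists_abs_integral_mul_energyDensity_sub_le (hp : 1 < p) (N : ℝ) :
    ∃ C, 0 ≤ C ∧ ∀ v w, DecayBound N v → DecayBound N w → ∀ θ : ℝ → ℝ, ContDiff ℝ 1 θ →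
      BddContinuous θ → BddContinuous (deriv θ) → ∀ ε, (∀ x, |θ x| ≤ ε * |x|) →
      (∀ x, |deriv θ x| ≤ ε * |x|) →
      |∫ x, θ x * (energyDensity p v x - energyDensity p w x)|
        ≤ C * ε * √(∫ x, (v x - w x) ^ 2) := by
  rcases lt_or_ge N 0 with hN | hN
  · exact ⟨0, le_rfl, fun v w hv => absurd ((abs_nonneg _).trans (hv 0).1) (by simpa using hN)⟩
  set k : ℝ → ℝ := fun x => x * (1 + x ^ 2)⁻¹
  refine ⟨N * (N ^ (p - 1) + 2) * √(∫ x, k x ^ 2), by positivity,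
    fun v w hv hw θ hθ hθ₀ hθ₁ ε hε₀ hε₁ => ?_⟩
  have hε : 0 ≤ ε := by simpa using (abs_nonneg _).trans (hε₀ 1)
  have hvw : MemLp (fun x => v x - w x) 2 := QuadDecay.memLp_two (by fun_prop)
  have hint : Integrable fun x => |k x| * |v x - w x| :=
    memLp_two_id_mul_inv_one_add_sq.abs.integrable_mul hvw.abs
  rw [integral_mul_energyDensity_sub hp v w hθ hθ₀ hθ₁, ← norm_eq_abs]
  calc _ ≤ ∫ x, N * (N ^ (p - 1) + 2) * ε * (|k x| * |v x - w x|) :=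
        norm_integral_le_of_norm_le (hint.const_mul _)
          (.of_forall fun x => abs_integrand_energyDensity_sub_le hp.le hv hw (hε₀ x) (hε₁ x))
    _ ≤ N * (N ^ (p - 1) + 2) * ε * (√(∫ x, k x ^ 2) * √(∫ x, (v x - w x) ^ 2)) := by
        rw [integral_const_mul]
        gcongr
        exact integral_abs_mul_abs_le_sqrt_mul_sqrt memLp_two_id_mul_inv_one_add_sq hvw
    _ = _ := by ring

end TailEstimate

/-! ### Solutions and their conservation laws -/

section PartialDerivatives

variable {V Vx Vt : ℝ → ℝ → ℝ}

lemma eq_fderiv_apply_snd (hV : Differentiable ℝ fun q : ℝ × ℝ => V q.1 q.2)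
    (hx : ∀ t x, HasDerivAt (V t) (Vx t x) x) (q : ℝ × ℝ) :
    Vx q.1 q.2 = fderiv ℝ (fun q : ℝ × ℝ => V q.1 q.2) q (0, 1) :=
  (hx q.1 q.2).unique (HasFDerivAt.comp_hasDerivAt (f := fun y => (q.1, y)) q.2
    (hV q).hasFDerivAt ((hasDerivAt_const q.2 q.1).prodMk (hasDerivAt_id q.2)))

lemma eq_fderiv_apply_fst (hV : Differentiable ℝ fun q : ℝ × ℝ => V q.1 q.2)
    (ht : ∀ t x, HasDerivAt (fun s => V s x) (Vt t x) t) (q : ℝ × ℝ) :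
    Vt q.1 q.2 = fderiv ℝ (fun q : ℝ × ℝ => V q.1 q.2) q (1, 0) :=
  (ht q.1 q.2).unique (HasFDerivAt.comp_hasDerivAt (f := fun s => (s, q.2)) q.1
    (hV q).hasFDerivAt ((hasDerivAt_id q.1).prodMk (hasDerivAt_const q.1 q.2)))

lemma conservationLaw_of_contDiff (hV : ContDiff ℝ 2 fun q : ℝ × ℝ => V q.1 q.2)
    (hx : ∀ t x, HasDerivAt (V t) (Vx t x) x)
    (ht : ∀ t x, HasDerivAt (fun s => V s x) (Vt t x) t) : ConservationLaw Vx Vt := by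
  set U : ℝ × ℝ → ℝ := fun q => V q.1 q.2
  have hVd := hV.differentiable two_ne_zero
  have hD : ContDiff ℝ 1 (fderiv ℝ U) := hV.fderiv_right (by norm_num)
  have hx' : (fun q : ℝ × ℝ => Vx q.1 q.2) = fun q => fderiv ℝ U q (0, 1) :=
    funext (eq_fderiv_apply_snd hVd hx)
  have ht' : (fun q : ℝ × ℝ => Vt q.1 q.2) = fun q => fderiv ℝ U q (1, 0) :=
    funext (eq_fderiv_apply_fst hVd ht)
  have hderiv : ∀ e q, HasFDerivAt (fun q => fderiv ℝ U q e)
      ((fderiv ℝ (fderiv ℝ U) q).flip e) q := fun e q => by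
    simpa using (hD.differentiable one_ne_zero q).hasFDerivAt.clm_apply (hasFDerivAt_const e q)
  refine ⟨hx' ▸ hD.continuous.clm_apply continuous_const,
    ht' ▸ hD.continuous.clm_apply continuous_const,
    fun t x => fderiv ℝ (fderiv ℝ U) (t, x) (1, 0) (0, 1), ?_, fun t x => ?_, fun t x => ?_⟩
  · exact ((hD.continuous_fderiv one_ne_zero).clm_apply continuous_const).clm_apply continuous_const
  · rw [show (fun s => Vx s x) = fun s => fderiv ℝ U (s, x) (0, 1) from
      funext fun s => congrFun hx' (s, x)]
    exact (hderiv (0, 1) (t, x)).comp_hasDerivAt t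
      ((hasDerivAt_id t).prodMk (hasDerivAt_const t x))
  · beta_reduce
    rw [show Vt t = fun y => fderiv ℝ U (t, y) (1, 0) from funext fun y => congrFun ht' (t, y),
      hV.contDiffAt.isSymmSndFDerivAt (by simp) (1, 0) (0, 1)]
    exact (hderiv (1, 0) (t, x)).comp_hasDerivAt x
      ((hasDerivAt_const x t).prodMk (hasDerivAt_id x))

end PartialDerivatives

lemma contDiff_derivCLM {u : ℝ → 𝓢(ℝ, ℝ)} (hu : ContDiff ℝ ∞ fun q : ℝ × ℝ => u q.1 q.2) :
    ContDiff ℝ ∞ fun q : ℝ × ℝ => ∂ (u q.1) q.2 := by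
  rw [show (fun q : ℝ × ℝ => ∂ (u q.1) q.2) = _ from funext (eq_fderiv_apply_snd
    (hu.differentiable (by simp)) fun t x => hasDerivAt_schwartz (u t) x)]
  exact (hu.fderiv_right (by simp)).clm_apply contDiff_const

/-- A global Schwartz solution of the defocusing generalized KdV equation, as a curve of Schwartz
functions. No topology on the Schwartz space enters: smoothness is that of a function of
`(t, x)`. -/
structure IsSolution (p : ℝ) (u : ℝ → 𝓢(ℝ, ℝ)) : Prop where
  contDiff : ContDiff ℝ ∞ fun q : ℝ × ℝ => u q.1 q.2
  hasDerivAt : ∀ t x, HasDerivAt (fun s => u s x) (velocity p (u t) x) t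

namespace IsSolution

variable {p : ℝ} {u : ℝ → 𝓢(ℝ, ℝ)} (hu : IsSolution p u)
include hu

lemma continuous_energyGrad (hp : 1 < p) :
    Continuous fun q : ℝ × ℝ => energyGrad p (u q.1) q.2 :=
  (contDiff_derivCLM (u := fun t => ∂ (u t)) (contDiff_derivCLM hu.contDiff)).continuous.neg.add
    ((continuous_nonlin hp).comp hu.contDiff.continuous)

lemma conservationLaw_deriv :
    ConservationLaw (fun t x => ∂ (u t) x) fun t x => velocity p (u t) x :=
  conservationLaw_of_contDiff (contDiff_infty.1 hu.contDiff 2)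
    (fun t x => hasDerivAt_schwartz (u t) x) hu.hasDerivAt

lemma conservationLaw_self (hp : 1 < p) :
    ConservationLaw (fun t x => u t x) fun t x => energyGrad p (u t) x :=
  ⟨hu.contDiff.continuous, hu.continuous_energyGrad hp, fun t x => velocity p (u t) x,
    hu.conservationLaw_deriv.continuous_flux, hu.hasDerivAt,
    fun t x => hasDerivAt_energyGrad (u t) hp x⟩

lemma continuous_potential (hp : 0 < p) : Continuous fun q : ℝ × ℝ => potential p (u q.1 q.2) :=
  (continuous_iff_continuousAt.2 fun y => (hasDerivAt_potential hp y).continuousAt).comp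
    hu.contDiff.continuous

lemma conservationLaw_mass (hp : 1 < p) :
    ConservationLaw (fun t x => u t x ^ 2) fun t x => massFlux p (u t) x := by
  have hc := hu.contDiff.continuous
  have hcx := (contDiff_derivCLM hu.contDiff).continuous
  have hw := hu.continuous_energyGrad hp
  have hF := hu.continuous_potential (by linarith)
  exact ⟨hc.pow 2, ((hc.mul hw).const_mul 2).add (hcx.pow 2) |>.sub (hF.const_mul 2),
    fun t x => 2 * (u t x * velocity p (u t) x),
    (hc.mul hu.conservationLaw_deriv.continuous_flux).const_mul 2,
    fun t x => ((hu.hasDerivAt t x).fun_pow 2).congr_deriv (by push_cast; ring),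
    fun t x => hasDerivAt_massFlux (u t) hp x⟩

lemma conservationLaw_energy (hp : 1 < p) :
    ConservationLaw (fun t x => energyDensity p (u t) x) fun t x => energyFlux p (u t) x := by
  obtain ⟨hcx, hcv, d, hd, hdt, hdx⟩ := hu.conservationLaw_deriv
  have hw := hu.continuous_energyGrad hp
  have hF := hu.continuous_potential (by linarith)
  refine ⟨((hcx.pow 2).const_mul _).add hF, (hcx.mul hcv).add ((hw.pow 2).const_mul _),
    fun t x => ∂ (u t) x * d t x + nonlin p (u t x) * velocity p (u t) x,
    (hcx.mul hd).add (((continuous_nonlin hp).comp hu.contDiff.continuous).mul hcv),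
    fun t x => ?_, fun t x => ?_⟩
  · refine ((((hdt t x).fun_pow 2).const_mul (1 / 2)).fun_add
      ((hasDerivAt_potential (by linarith) (u t x)).comp t (hu.hasDerivAt t x))).congr_deriv ?_
    push_cast
    ring
  · refine (((hasDerivAt_schwartz (∂ (u t)) x).fun_mul (hdx t x)).fun_add
      (((hasDerivAt_energyGrad (u t) hp x).fun_pow 2).const_mul (1 / 2))).congr_deriv ?_
    unfold energyGrad
    push_cast
    ring

end IsSolution

/-! ### Conservation of mass -/

namespace IsSolution

variable {p a b K : ℝ} {u : ℝ → 𝓢(ℝ, ℝ)} {ψ : ℝ → ℝ}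

lemma integral_weight_mul_mass_sub (hu : IsSolution p u) (hp : 1 < p) (hψ : IsWeight ψ)
    (hK : ∀ t ∈ uIcc a b, ∫ x, density p (u t) x ≤ K) :
    (∫ x, ψ x * u b x ^ 2) - ∫ x, ψ x * u a x ^ 2 =
      -∫ t in a..b, ∫ x, deriv ψ x * massFlux p (u t) x := by
  have hbdd := hψ.bddContinuous
  obtain ⟨B, hB⟩ := hψ.exists_abs_mul_deriv_cutoff_le
  refine (hu.conservationLaw_mass hp).integral_weight_mul_sub hψ (C := (8 + 2 * p) * B * K)
    (fun t => QuadDecay.integrable (by fun_prop)) fun R hR t ht => ?_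
  have hBR : 0 ≤ B / R := (abs_nonneg _).trans (hB R hR 0).1
  have hχ : ContDiff ℝ 1 (deriv (cutoff R)) :=
    ((contDiff_infty_iff_deriv.1 (contDiff_cutoff R)).2).of_le (by simp)
  calc _ ≤ (8 + 2 * p) * (B / R) * ∫ x, density p (u t) x :=
        abs_integral_mul_massFlux_le (u t) hp (hψ.contDiff.mul hχ)
          (fun x => (hB R hR x).1) fun x => (hB R hR x).2
    _ ≤ (8 + 2 * p) * (B / R) * K := by
        gcongr
        exact hK t ht
    _ = _ := by ring

lemma integral_sq_eq (hu : IsSolution p u) (hp : 1 < p)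
    (hK : ∀ t ∈ uIcc a b, ∫ x, density p (u t) x ≤ K) : ∫ x, u b x ^ 2 = ∫ x, u a x ^ 2 := by
  simpa [sub_eq_zero] using hu.integral_weight_mul_mass_sub hp (IsWeight.const 1) hK

end IsSolution

/-! ### The solution is Lipschitz in time with values in `L²` -/

section LipschitzL2

variable {p : ℝ}

lemma exists_norm_iteratedFDeriv_cutoff_le (n : ℕ) :
    ∃ B, ∀ R, 1 ≤ R → ∀ x, ‖iteratedFDeriv ℝ n (cutoff R) x‖ ≤ B := by
  have hbump : ContDiff ℝ n bump := bump.contDiff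
  obtain ⟨B, hB⟩ := (bump.hasCompactSupport.iteratedFDeriv (𝕜 := ℝ) n).exists_bound_of_continuous
    (hbump.continuous_iteratedFDeriv le_rfl)
  refine ⟨B, fun R hR x => (hB (R⁻¹ * x)).trans' ?_⟩
  rw [norm_iteratedFDeriv_eq_norm_iteratedDeriv, norm_iteratedFDeriv_eq_norm_iteratedDeriv]
  unfold cutoff
  rw [iteratedDeriv_comp_const_mul hbump, norm_mul, norm_pow, norm_of_nonneg (by positivity)]
  exact mul_le_of_le_one_left (norm_nonneg _)
    (pow_le_one₀ (by positivity) (inv_le_one_of_one_le₀ hR))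

lemma exists_abs_iteratedDeriv_cutoff_mul_le (g : 𝓢(ℝ, ℝ)) (n : ℕ) : ∃ D, ∀ R, 1 ≤ R → ∀ x,
    |iteratedDeriv n (fun y => cutoff R y * g y) x| ≤ D * (1 + x ^ 2)⁻¹ := by
  choose B hB using exists_norm_iteratedFDeriv_cutoff_le
  choose D₀ _ hD₀ using g.decay 0
  choose D₂ _ hD₂ using g.decay 2
  refine ⟨∑ i ∈ Finset.range (n + 1), n.choose i * B i * (D₀ (n - i) + D₂ (n - i)),
    fun R hR x => ?_⟩
  rw [← norm_eq_abs, ← norm_iteratedFDeriv_eq_norm_iteratedDeriv, Finset.sum_mul]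
  refine (norm_iteratedFDeriv_mul_le (contDiff_infty.1 (contDiff_cutoff R) n) (g.smooth n) x
    le_rfl).trans
    (Finset.sum_le_sum fun i _ => ?_)
  have hg : ‖iteratedFDeriv ℝ (n - i) g x‖ ≤ (D₀ (n - i) + D₂ (n - i)) * (1 + x ^ 2)⁻¹ := by
    rw [← div_eq_mul_inv, le_div_iff₀ (by positivity)]
    have h₀ := hD₀ (n - i) x
    have h₂ := hD₂ (n - i) x
    simp only [pow_zero, one_mul, norm_eq_abs, sq_abs] at h₀ h₂
    linarith
  have hB₀ : 0 ≤ B i := (norm_nonneg _).trans (hB i R hR x)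
  rw [mul_assoc _ (D₀ _ + _)]
  gcongr
  exact hB i R hR x

lemma integral_mul_energyGrad_sub (hp : 1 < p) (v w : 𝓢(ℝ, ℝ)) {ζ : ℝ → ℝ} (hζ : ContDiff ℝ 2 ζ)
    (hζ₀ : BddContinuous ζ) (hζ₁ : BddContinuous (deriv ζ))
    (hζ₂ : BddContinuous (deriv (deriv ζ))) :
    ∫ x, ζ x * (energyGrad p v x - energyGrad p w x) =
      ∫ x, ζ x * (nonlin p (v x) - nonlin p (w x)) - deriv (deriv ζ) x * (v x - w x) := by
  refine integral_eq_integral_of_hasDerivAt_sub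
    (G := fun x => deriv ζ x * (v x - w x) - ζ x * (∂ v x - ∂ w x))
    (QuadDecay.integrable (by fun_prop (disch := assumption)))
    (QuadDecay.integrable (by fun_prop (disch := assumption)))
    (QuadDecay.integrable (by fun_prop)) fun x => ?_
  have hζ' := (contDiff_succ_iff_deriv (n := 1).1 hζ).2.2
  refine (((hζ'.differentiable one_ne_zero x).hasDerivAt.fun_mul
    ((hasDerivAt_schwartz v x).fun_sub (hasDerivAt_schwartz w x))).fun_sub
    ((hζ.differentiable two_ne_zero x).hasDerivAt.fun_mul
      ((hasDerivAt_schwartz (∂ v) x).fun_sub (hasDerivAt_schwartz (∂ w) x)))).congr_deriv ?_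
  unfold energyGrad
  ring

lemma abs_integral_mul_energyGrad_sub_le (hp : 1 < p) {v w : 𝓢(ℝ, ℝ)} {S : ℝ}
    (hv : ∀ x, |v x| ≤ S) (hw : ∀ x, |w x| ≤ S) {ζ : ℝ → ℝ} (hζ : ContDiff ℝ 2 ζ)
    (hζ₁ : BddContinuous (deriv ζ)) {D : ℝ} (hD₀ : ∀ x, |ζ x| ≤ D * (1 + x ^ 2)⁻¹)
    (hD₂ : ∀ x, |deriv (deriv ζ) x| ≤ D * (1 + x ^ 2)⁻¹) :
    |∫ x, ζ x * (energyGrad p v x - energyGrad p w x)| ≤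
      D * (p * S ^ (p - 1) + 1) * √(∫ x : ℝ, ((1 + x ^ 2)⁻¹) ^ 2) * √(∫ x, (v x - w x) ^ 2) := by
  have hD : 0 ≤ D := by simpa using (abs_nonneg _).trans (hD₀ 0)
  have hk : ∀ x : ℝ, D * (1 + x ^ 2)⁻¹ ≤ D := fun x =>
    mul_le_of_le_one_right hD (inv_le_one_of_one_le₀ (le_add_of_nonneg_right (sq_nonneg x)))
  have hkL : MemLp (fun x : ℝ => (1 + x ^ 2)⁻¹) 2 := QuadDecay.inv_one_add_sq.memLp_two
  have hvw : MemLp (fun x => v x - w x) 2 := QuadDecay.memLp_two (by fun_prop)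
  have hint : Integrable fun x : ℝ => |(1 + x ^ 2)⁻¹| * |v x - w x| :=
    hkL.abs.integrable_mul hvw.abs
  have hS : 0 ≤ p * S ^ (p - 1) :=
    mul_nonneg (by linarith) (rpow_nonneg ((abs_nonneg _).trans (hv 0)) _)
  have hζ'' : Continuous (deriv (deriv ζ)) :=
    (contDiff_succ_iff_deriv (n := 1).1 hζ).2.2.continuous_deriv le_rfl
  rw [integral_mul_energyGrad_sub hp v w hζ ⟨hζ.continuous, D, fun x => (hD₀ x).trans (hk x)⟩ hζ₁
    ⟨hζ'', D, fun x => (hD₂ x).trans (hk x)⟩, mul_assoc, ← norm_eq_abs]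
  refine (norm_integral_le_of_norm_le (hint.const_mul (D * (p * S ^ (p - 1) + 1)))
    (.of_forall fun x => ?_)).trans ?_
  · calc _ ≤ |ζ x| * |nonlin p (v x) - nonlin p (w x)| + |deriv (deriv ζ) x| * |v x - w x| := by
          simpa only [norm_mul, norm_eq_abs] using norm_sub_le
            (ζ x * (nonlin p (v x) - nonlin p (w x))) (deriv (deriv ζ) x * (v x - w x))
      _ ≤ D * (1 + x ^ 2)⁻¹ * (p * S ^ (p - 1) * |v x - w x|)
            + D * (1 + x ^ 2)⁻¹ * |v x - w x| := by
          gcongr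
          exacts [hD₀ x, abs_nonlin_sub_le hp (hv x) (hw x), hD₂ x]
      _ = _ := by
          rw [abs_of_pos (by positivity : 0 < (1 + x ^ 2)⁻¹)]
          ring
  · rw [integral_const_mul]
    gcongr
    exact integral_abs_mul_abs_le_sqrt_mul_sqrt hkL hvw

lemma tendsto_integral_deriv_cutoff_mul_energyGrad (hp : 1 < p) (v : 𝓢(ℝ, ℝ)) :
    Tendsto (fun R => ∫ x, deriv (fun y => cutoff R y * v y) x * energyGrad p v x) atTop (𝓝 0) := by
  have hflux : Integrable fun x => v x * velocity p v x :=
    QuadDecay.integrable (by fun_prop (disch := assumption))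
  have hzero : ∫ x, v x * velocity p v x = 0 := by
    have h := integral_eq_zero_of_hasDerivAt_of_integrable (hasDerivAt_massFlux v hp)
      (hflux.const_mul 2) (QuadDecay.massFlux v hp).integrable
    rw [integral_const_mul] at h
    linarith
  have hlim := (tendsto_integral_cutoff_mul hflux).neg
  rw [hzero, neg_zero] at hlim
  refine hlim.congr' ?_
  filter_upwards [eventually_gt_atTop 0] with R hR
  have hz : ContDiff ℝ ∞ fun y => cutoff R y * v y := (contDiff_cutoff R).mul (v.smooth ⊤)
  have hs : HasCompactSupport fun y => cutoff R y * v y := (hasCompactSupport_cutoff hR).mul_right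
  have hw := (QuadDecay.energyGrad v hp).continuous
  have hz' : Continuous (deriv fun y => cutoff R y * v y) := hz.continuous_deriv (by simp)
  have hparts := integral_mul_deriv_eq_deriv_mul_of_integrable (u := fun y => cutoff R y * v y)
    (fun x _ => (hz.differentiable (by simp) x).hasDerivAt)
    (fun x _ => hasDerivAt_energyGrad v hp x)
    (integrable_mul_of_hasCompactSupport hz.continuous hs (QuadDecay.velocity v hp).continuous)
    (integrable_mul_of_hasCompactSupport hz' hs.deriv hw)
    (integrable_mul_of_hasCompactSupport hz.continuous hs hw)
  simp only [mul_assoc] at hparts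
  rw [hparts, neg_neg]

lemma exists_abs_integral_deriv_cutoff_mul_energyGrad_sub_le (hp : 1 < p) (g : 𝓢(ℝ, ℝ)) (S : ℝ) :
    ∃ L, 0 ≤ L ∧ ∀ R, 1 ≤ R → ∀ v : 𝓢(ℝ, ℝ), (∀ x, |v x| ≤ S) →
      |∫ x, deriv (fun y => cutoff R y * g y) x * (energyGrad p v x - energyGrad p g x)|
        ≤ L * √(∫ x, (v x - g x) ^ 2) := by
  obtain ⟨D₁, hD₁⟩ := exists_abs_iteratedDeriv_cutoff_mul_le g 1
  obtain ⟨D₃, hD₃⟩ := exists_abs_iteratedDeriv_cutoff_mul_le g 3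
  obtain ⟨A, hA₀, hA⟩ := (BddContinuous.schwartz g).exists_nonneg_bound
  have hD₁₀ : 0 ≤ D₁ := by simpa using (abs_nonneg _).trans (hD₁ 1 le_rfl 0)
  have : 0 ≤ max D₁ D₃ := le_max_of_le_left hD₁₀
  have : 0 ≤ max S A := le_max_of_le_right hA₀
  refine ⟨max D₁ D₃ * (p * max S A ^ (p - 1) + 1) * √(∫ x : ℝ, ((1 + x ^ 2)⁻¹) ^ 2),
    by positivity, fun R hR v hv => ?_⟩
  have hz : ContDiff ℝ ∞ fun y => cutoff R y * g y := (contDiff_cutoff R).mul (g.smooth ⊤)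
  have hs : HasCompactSupport fun y => cutoff R y * g y :=
    (hasCompactSupport_cutoff (by linarith)).mul_right
  have hz' : ContDiff ℝ ∞ (deriv fun y => cutoff R y * g y) := (contDiff_infty_iff_deriv.1 hz).2
  refine abs_integral_mul_energyGrad_sub_le hp (fun x => (hv x).trans (le_max_left _ _))
    (fun x => (hA x).trans (le_max_right _ _)) (contDiff_infty.1 hz' 2)
    (.of_hasCompactSupport (hz'.continuous_deriv (by simp)) hs.deriv.deriv)
    (fun x => ?_) fun x => ?_
  · rw [← iteratedDeriv_one]
    refine (hD₁ R hR x).trans ?_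
    gcongr
    exact le_max_left _ _
  · refine ((?_ : _ = _).trans_le (hD₃ R hR x)).trans ?_
    · simp only [iteratedDeriv_succ, iteratedDeriv_zero]
    · gcongr
      exact le_max_right _ _

lemma integral_sub_sq (v w : 𝓢(ℝ, ℝ)) :
    ∫ x, (v x - w x) ^ 2 = (∫ x, v x ^ 2) + (∫ x, w x ^ 2) - 2 * ∫ x, w x * v x := by
  have hv : Integrable fun x => v x ^ 2 := QuadDecay.integrable (by fun_prop)
  have hw : Integrable fun x => w x ^ 2 := QuadDecay.integrable (by fun_prop)
  have hwv : Integrable fun x => w x * v x := QuadDecay.integrable (by fun_prop)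
  rw [← integral_const_mul, ← integral_add hv hw,
    ← integral_sub (f := fun x => v x ^ 2 + w x ^ 2) (hv.add hw) (hwv.const_mul 2)]
  congr 1 with x
  ring

lemma integral_sub_sq_le (v w : 𝓢(ℝ, ℝ)) :
    ∫ x, (v x - w x) ^ 2 ≤ 2 * (∫ x, v x ^ 2) + 2 * ∫ x, w x ^ 2 := by
  have hv : Integrable fun x => v x ^ 2 := QuadDecay.integrable (by fun_prop)
  have hw : Integrable fun x => w x ^ 2 := QuadDecay.integrable (by fun_prop)
  rw [← integral_const_mul, ← integral_const_mul,
    ← integral_add (hv.const_mul 2) (hw.const_mul 2)]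
  refine integral_mono (QuadDecay.integrable (by fun_prop)) ((hv.const_mul 2).add (hw.const_mul 2))
    fun x => ?_
  beta_reduce
  linarith [sq_nonneg (v x + w x), add_sq (v x) (w x), sub_sq (v x) (w x)]

namespace IsSolution

variable {u : ℝ → 𝓢(ℝ, ℝ)}

lemma exists_integral_mul_sub_sq_le (hu : IsSolution p u) (hp : 1 < p) (t K : ℝ) :
    ∃ L, 0 ≤ L ∧ ∀ s m, (∀ τ ∈ uIcc t s, ∫ x, density p (u τ) x ≤ K) →
      (∀ τ ∈ uIcc t s, √(∫ x, (u τ x - u t x) ^ 2) ≤ m) →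
      |(∫ x, u t x * u s x) - ∫ x, u t x * u t x| ≤ L * |s - t| * m := by
  obtain ⟨L, hL₀, hL⟩ :=
    exists_abs_integral_deriv_cutoff_mul_energyGrad_sub_le hp (u t) √(2 * K)
  refine ⟨L, hL₀, fun s m hK hm => ?_⟩
  set z : ℝ → ℝ → ℝ := fun R x => cutoff R x * u t x
  set ε : ℝ → ℝ := fun R => ∫ x, deriv (z R) x * energyGrad p (u t) x
  have hbound : ∀ R, 1 ≤ R → |(∫ x, cutoff R x * (u t x * u s x))
      - ∫ x, cutoff R x * (u t x * u t x)| ≤ (L * m + |ε R|) * |s - t| := fun R hR => by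
    have hz : ContDiff ℝ 1 (z R) := ((contDiff_cutoff R).mul ((u t).smooth ⊤)).of_le (by simp)
    have hs : HasCompactSupport (z R) := (hasCompactSupport_cutoff (by linarith)).mul_right
    have hlaw := (hu.conservationLaw_self hp).integral_mul_sub hz hs t s
    simp only [z, mul_assoc] at hlaw
    rw [hlaw, abs_neg, ← norm_eq_abs]
    refine intervalIntegral.norm_integral_le_of_norm_le_const fun τ hτ => ?_
    have hτ' := uIoc_subset_uIcc hτ
    have hint : ∀ τ, Integrable fun x => deriv (z R) x * energyGrad p (u τ) x := fun τ =>
      integrable_mul_of_hasCompactSupport (hz.continuous_deriv le_rfl) hs.deriv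
        (QuadDecay.energyGrad (u τ) hp).continuous
    have hsup : ∀ x, |u τ x| ≤ √(2 * K) := fun x => abs_le_sqrt
      ((sq_le_two_mul_integral_density (u τ) hp x).trans (by linarith [hK τ hτ']))
    calc _ = |(∫ x, deriv (z R) x * (energyGrad p (u τ) x - energyGrad p (u t) x)) + ε R| := by
          simp only [mul_sub]
          rw [integral_sub (hint τ) (hint t), sub_add_cancel, norm_eq_abs]
      _ ≤ L * m + |ε R| := by
          refine (abs_add_le _ _).trans (add_le_add_left ((hL R hR (u τ) hsup).trans ?_) _)
          gcongr
          exact hm τ hτ'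
  have hlim := ((tendsto_integral_deriv_cutoff_mul_energyGrad hp (u t)).abs.const_add
    (L * m)).mul_const |s - t|
  rw [abs_zero, add_zero, mul_right_comm] at hlim
  refine le_of_tendsto_of_tendsto
    ((tendsto_integral_cutoff_mul (QuadDecay.integrable (by fun_prop))).sub
      (tendsto_integral_cutoff_mul (QuadDecay.integrable (by fun_prop)))).abs hlim ?_
  filter_upwards [eventually_ge_atTop 1] with R hR using hbound R hR

lemma exists_sqrt_integral_sub_sq_le (hu : IsSolution p u) (hp : 1 < p) (t K : ℝ) :
    ∃ L, 0 ≤ L ∧ ∀ s, (∀ τ ∈ uIcc t s, ∫ x, density p (u τ) x ≤ K) →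
      √(∫ x, (u s x - u t x) ^ 2) ≤ L * |s - t| := by
  obtain ⟨L, hL₀, hL⟩ := hu.exists_integral_mul_sub_sq_le hp t K
  refine ⟨2 * L, by positivity, fun s hK => ?_⟩
  have hmass : ∀ τ ∈ uIcc t s, ∫ x, u τ x ^ 2 = ∫ x, u t x ^ 2 := fun τ hτ =>
    hu.integral_sq_eq hp fun σ hσ => hK σ (uIcc_subset_uIcc_left hτ hσ)
  refine le_of_sq_le_mul_of_bddAbove (S := uIcc t s)
    (V := fun τ => √(∫ x, (u τ x - u t x) ^ 2)) ?_ (by positivity) (fun m hm τ hτ => ?_)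
    right_mem_uIcc
  · refine ⟨√(4 * ∫ x, u t x ^ 2), ?_⟩
    rintro _ ⟨τ, hτ, rfl⟩
    exact sqrt_le_sqrt ((integral_sub_sq_le (u τ) (u t)).trans_eq (by rw [hmass τ hτ]; ring))
  · have hsub := uIcc_subset_uIcc_left hτ
    have h := hL τ m (fun σ hσ => hK σ (hsub hσ)) fun σ hσ => hm σ (hsub hσ)
    have hm₀ : 0 ≤ m := (sqrt_nonneg _).trans (hm τ hτ)
    rw [sq_sqrt (integral_nonneg fun x => sq_nonneg _)]
    calc ∫ x, (u τ x - u t x) ^ 2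
        = -2 * ((∫ x, u t x * u τ x) - ∫ x, u t x * u t x) := by
          rw [integral_sub_sq, hmass τ hτ]
          simp only [← sq]
          ring
      _ ≤ 2 * (L * |τ - t| * m) := by
          linarith [neg_abs_le ((∫ x, u t x * u τ x) - ∫ x, u t x * u t x)]
      _ ≤ 2 * (L * |s - t| * m) := by
          gcongr 2 * (L * ?_ * m)
          exact abs_sub_left_of_mem_uIcc hτ
      _ = 2 * L * |s - t| * m := by ring

end IsSolution

end LipschitzL2

/-! ### Weighted conservation laws along a countable cover of times -/

namespace ConservationLaw

variable {ρ σ : ℝ → ℝ → ℝ} {ψ : ℝ → ℝ}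

/-- The quantity `∫ ψ ρ(τ) + ∫_a^τ ∫ ψ' σ`, which a conservation law `∂_t ρ = ∂_x σ` formally
keeps constant in `τ`. -/
noncomputable def balance (ρ σ : ℝ → ℝ → ℝ) (ψ : ℝ → ℝ) (a τ : ℝ) : ℝ :=
  (∫ x, ψ x * ρ τ x) + ∫ t in a..τ, ∫ x, deriv ψ x * σ t x

lemma integral_weight_mul_eq_cutoff_add_tail (h : ConservationLaw ρ σ) (hψ : IsWeight ψ)
    (hρ : ∀ t, Integrable fun x => ψ x * ρ t x) {R : ℝ} (hR : 0 < R) (t : ℝ) :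
    ∫ x, ψ x * ρ t x =
      (∫ x, cutoff R x * (ψ x * ρ t x)) + ∫ x, (1 - cutoff R x) * ψ x * ρ t x := by
  have hcut : Integrable fun x => cutoff R x * (ψ x * ρ t x) :=
    integrable_mul_of_hasCompactSupport (contDiff_cutoff R).continuous (hasCompactSupport_cutoff hR)
      (hψ.contDiff.continuous.mul (h.continuous_density_apply t))
  have htail : ∫ x, (1 - cutoff R x) * ψ x * ρ t x =
      ∫ x, (ψ x * ρ t x - cutoff R x * (ψ x * ρ t x)) := by
    congr 1 with x
    ring
  rw [htail, integral_sub (hρ t) hcut, add_sub_cancel]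

lemma continuous_integral_deriv_weight_mul (h : ConservationLaw ρ σ) (hψ : IsWeight ψ) :
    Continuous fun t => ∫ x, deriv ψ x * σ t x :=
  h.continuous_integral_mul_flux hψ.continuous_deriv hψ.hasCompactSupport_deriv

lemma eventually_balance_sub (h : ConservationLaw ρ σ) (hψ : IsWeight ψ)
    (hρ : ∀ t, Integrable fun x => ψ x * ρ t x) (a : ℝ) : ∀ᶠ R in atTop, ∀ s t,
      balance ρ σ ψ a s - balance ρ σ ψ a t =
        ((∫ x, (1 - cutoff R x) * ψ x * ρ s x) - ∫ x, (1 - cutoff R x) * ψ x * ρ t x)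
          - ∫ τ in t..s, ∫ x, ψ x * deriv (cutoff R) x * σ τ x := by
  filter_upwards [h.eventually_integral_cutoff_mul_sub hψ, eventually_gt_atTop 0] with R hR hR0 s t
  have hint := fun b c => (h.continuous_integral_deriv_weight_mul hψ).intervalIntegrable
    (μ := volume) b c
  have hadj := intervalIntegral.integral_add_adjacent_intervals (hint a t) (hint t s)
  unfold balance
  rw [h.integral_weight_mul_eq_cutoff_add_tail hψ hρ hR0 s,
    h.integral_weight_mul_eq_cutoff_add_tail hψ hρ hR0 t, ← hadj]
  linarith [hR t s]

lemma hasDerivWithinAt_balance (h : ConservationLaw ρ σ) (hψ : IsWeight ψ)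
    (hρ : ∀ t, Integrable fun x => ψ x * ρ t x) (a : ℝ) {F : Set ℝ} {t C : ℝ}
    (htail : ∀ R, 1 ≤ R → ∀ s ∈ F, |(∫ x, (1 - cutoff R x) * ψ x * ρ s x)
      - ∫ x, (1 - cutoff R x) * ψ x * ρ t x| ≤ C / R * |s - t|)
    (hflux : ∀ R, 1 ≤ R → |∫ x, ψ x * deriv (cutoff R) x * σ t x| ≤ C / R) :
    HasDerivWithinAt (balance ρ σ ψ a) 0 F t := by
  rw [hasDerivWithinAt_iff_isLittleO, Asymptotics.isLittleO_iff]
  intro ε hε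
  have hsmall : ∀ᶠ R in atTop, C / R < ε / 2 :=
    (tendsto_const_nhds.div_atTop tendsto_id).eventually (gt_mem_nhds (by positivity))
  obtain ⟨R, hstep, hCR, hR⟩ :=
    ((h.eventually_balance_sub hψ hρ a).and (hsmall.and (eventually_ge_atTop 1))).exists
  have hcont : Continuous fun τ => ∫ x, ψ x * deriv (cutoff R) x * σ τ x :=
    h.continuous_integral_mul_flux
      (hψ.contDiff.continuous.mul ((contDiff_cutoff R).continuous_deriv (by simp)))
      (hasCompactSupport_cutoff (by linarith)).deriv.mul_left
  obtain ⟨δ, hδ, hnear⟩ := Metric.eventually_nhds_iff.1 ((hcont.abs.tendsto t).eventually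
    (gt_mem_nhds ((hflux R hR).trans_lt hCR)))
  filter_upwards [mem_nhdsWithin_of_mem_nhds (Metric.ball_mem_nhds t hδ), self_mem_nhdsWithin]
    with s hs hsF
  have hescape : |∫ τ in t..s, ∫ x, ψ x * deriv (cutoff R) x * σ τ x| ≤ ε / 2 * |s - t| := by
    rw [← norm_eq_abs]
    exact intervalIntegral.norm_integral_le_of_norm_le_const fun τ hτ => (hnear
      ((abs_sub_left_of_mem_uIcc (uIoc_subset_uIcc hτ)).trans_lt hs)).le
  rw [smul_zero, sub_zero, hstep, norm_eq_abs, norm_eq_abs]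
  calc _ ≤ C / R * |s - t| + ε / 2 * |s - t| :=
        (abs_sub _ _).trans (add_le_add (htail R hR s hsF) hescape)
    _ ≤ ε / 2 * |s - t| + ε / 2 * |s - t| := by gcongr
    _ = ε * |s - t| := by ring

lemma continuousOn_balance (h : ConservationLaw ρ σ) (hψ : IsWeight ψ)
    (hρ : ∀ t, Integrable fun x => ψ x * ρ t x) (a : ℝ) {I : Set ℝ} {C : ℝ}
    (htail : ∀ R, 1 ≤ R → ∀ t ∈ I, |∫ x, (1 - cutoff R x) * ψ x * ρ t x| ≤ C / R) :
    ContinuousOn (balance ρ σ ψ a) I := by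
  refine continuousOn_of_uniform_approx_of_continuousOn fun U hU => ?_
  obtain ⟨ε, hε, hεU⟩ := Metric.mem_uniformity_dist.1 hU
  have hsmall : ∀ᶠ R in atTop, C / R < ε :=
    (tendsto_const_nhds.div_atTop tendsto_id).eventually (gt_mem_nhds hε)
  obtain ⟨R, hCR, hR⟩ := (hsmall.and (eventually_ge_atTop 1)).exists
  have hR0 : 0 < R := by linarith
  have hcut : Continuous fun τ => ∫ x, cutoff R x * (ψ x * ρ τ x) :=
    continuous_integral_mul (contDiff_cutoff R).continuous (hasCompactSupport_cutoff hR0)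
      ((hψ.contDiff.continuous.comp continuous_snd).mul h.continuous_density)
  refine ⟨fun τ => (∫ x, cutoff R x * (ψ x * ρ τ x)) + ∫ t in a..τ, ∫ x, deriv ψ x * σ t x,
    (hcut.add (intervalIntegral.continuous_primitive (fun b c =>
      (h.continuous_integral_deriv_weight_mul hψ).intervalIntegrable b c) a)).continuousOn,
    fun τ hτ => hεU ?_⟩
  rw [balance, h.integral_weight_mul_eq_cutoff_add_tail hψ hρ hR0, dist_eq,
    add_sub_add_right_eq_sub, add_sub_cancel_left]
  exact (htail R hR τ hτ).trans_lt hCR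

lemma integral_weight_mul_sub_of_subset_iUnion (h : ConservationLaw ρ σ) (hψ : IsWeight ψ)
    (hρ : ∀ t, Integrable fun x => ψ x * ρ t x) {a b C : ℝ}
    (htail : ∀ R, 1 ≤ R → ∀ t ∈ uIcc a b, |∫ x, (1 - cutoff R x) * ψ x * ρ t x| ≤ C / R)
    {F : ℕ → Set ℝ} (hF : uIcc a b ⊆ ⋃ n, F n)
    (hlip : ∀ n, ∀ t ∈ F n, ∃ L, ∀ R, 1 ≤ R →
      (∀ s ∈ F n, |(∫ x, (1 - cutoff R x) * ψ x * ρ s x)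
        - ∫ x, (1 - cutoff R x) * ψ x * ρ t x| ≤ L / R * |s - t|) ∧
      |∫ x, ψ x * deriv (cutoff R) x * σ t x| ≤ L / R) :
    (∫ x, ψ x * ρ b x) - ∫ x, ψ x * ρ a x = -∫ t in a..b, ∫ x, deriv ψ x * σ t x := by
  have hbal := eq_of_hasDerivWithinAt_zero_of_subset_iUnion
    (h.continuousOn_balance hψ hρ a htail) hF
    fun n t ht => by
      obtain ⟨L, hL⟩ := hlip n t ht
      exact h.hasDerivWithinAt_balance hψ hρ a (fun R hR => (hL R hR).1) fun R hR => (hL R hR).2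
  simp only [balance, intervalIntegral.integral_same, add_zero] at hbal
  linarith

end ConservationLaw

/-! ### Moments -/

section Moment

variable {p : ℝ}

/-- The first absolute moment about `c` of the mass and energy densities of `v`. -/
noncomputable def moment (p c : ℝ) (v : 𝓢(ℝ, ℝ)) : ℝ := ∫ x, |x - c| * density p v x

lemma integrable_abs_sub_mul_sq (c : ℝ) (v : 𝓢(ℝ, ℝ)) : Integrable fun x => |x - c| * v x ^ 2 := by
  simpa only [sq, ← mul_assoc] using
    (QuadDecay.mul ((QuadDecay.schwartz v).abs_sub_mul c) (.schwartz v)).integrable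

lemma integrable_abs_sub_mul_energyDensity (hp : 1 < p) (c : ℝ) (v : 𝓢(ℝ, ℝ)) :
    Integrable fun x => |x - c| * energyDensity p v x := by
  have hpot : Integrable fun x => |x - c| * (v x * nonlin p (v x)) := by
    simpa only [mul_assoc] using
      (QuadDecay.mul ((QuadDecay.schwartz v).abs_sub_mul c) (.nonlin hp (.schwartz v))).integrable
  refine (((integrable_abs_sub_mul_sq c (∂ v)).const_mul (1 / 2)).add
    (hpot.const_mul (p + 1)⁻¹)).congr (.of_forall fun x => ?_)
  simp only [Pi.add_apply, mul_nonlin (by linarith : p + 1 ≠ 0), energyDensity]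
  field_simp

lemma moment_eq_add (hp : 1 < p) (c : ℝ) (v : 𝓢(ℝ, ℝ)) : moment p c v =
    (∫ x, |x - c| * v x ^ 2) + ∫ x, |x - c| * energyDensity p v x := by
  rw [← integral_add (integrable_abs_sub_mul_sq c v) (integrable_abs_sub_mul_energyDensity hp c v)]
  simp only [moment, density, mul_add]

lemma integrable_abs_sub_mul_density (hp : 1 < p) (c : ℝ) (v : 𝓢(ℝ, ℝ)) :
    Integrable fun x => |x - c| * density p v x :=
  ((integrable_abs_sub_mul_sq c v).add (integrable_abs_sub_mul_energyDensity hp c v)).congr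
    (.of_forall fun _ => (mul_add _ _ _).symm)

lemma integral_abs_sub_mul_sq_nonneg (c : ℝ) (v : 𝓢(ℝ, ℝ)) : 0 ≤ ∫ x, |x - c| * v x ^ 2 :=
  integral_nonneg fun x => by positivity

lemma integral_abs_sub_mul_energyDensity_nonneg (hp : 0 < p) (c : ℝ) (v : 𝓢(ℝ, ℝ)) :
    0 ≤ ∫ x, |x - c| * energyDensity p v x :=
  integral_nonneg fun x => mul_nonneg (abs_nonneg _) (energyDensity_nonneg v hp x)

end Moment

/-! ### Conservation of energy -/

lemma IsWeight.exists_abs_one_sub_cutoff_mul_le {ψ : ℝ → ℝ} (hψ : IsWeight ψ) :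
    ∃ B, 0 ≤ B ∧ ∀ R, 1 ≤ R → ∀ x, |(1 - cutoff R x) * ψ x| ≤ B / R * |x| ∧
      |deriv (fun y => (1 - cutoff R y) * ψ y) x| ≤ B / R * |x| := by
  obtain ⟨A, hA₀, hA⟩ := hψ.bddContinuous.exists_nonneg_bound
  obtain ⟨A', hA'₀, hA'⟩ := hψ.bddContinuous_deriv.exists_nonneg_bound
  obtain ⟨B, hB₁, hB⟩ := exists_abs_deriv_cutoff_le
  refine ⟨B * A + A', by positivity, fun R hR x => ?_⟩
  have hχ := ((contDiff_cutoff R).differentiable (by simp) x).hasDerivAt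
  rw [((hχ.const_sub 1).fun_mul (hψ.hasDerivAt x)).deriv]
  rcases lt_or_ge |x| R with hx | hx
  · rw [cutoff_eq_one hx.le, deriv_cutoff_eq_zero hx]
    simp only [sub_self, zero_mul, neg_zero, add_zero, abs_zero, and_self]
    positivity
  have hχ₀ : |1 - cutoff R x| ≤ 1 :=
    abs_le.2 ⟨by linarith [cutoff_le_one R x], by linarith [cutoff_nonneg R x]⟩
  have hχ₁ : |-deriv (cutoff R) x| ≤ B := by
    rw [abs_neg]
    exact (hB R hR x).1.trans (div_le_self (by linarith) hR)
  have hxR : B * A + A' ≤ (B * A + A') / R * |x| := by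
    rw [div_mul_eq_mul_div, le_div_iff₀ (by linarith)]
    gcongr
  refine ⟨le_trans ?_ hxR, (abs_add_le _ _).trans (le_trans ?_ hxR)⟩
  · rw [abs_mul]
    nlinarith [mul_le_mul hχ₀ (hA x) (abs_nonneg _) zero_le_one]
  · rw [abs_mul, abs_mul]
    linarith [mul_le_mul hχ₁ (hA x) (abs_nonneg _) (by linarith),
      mul_le_mul hχ₀ (hA' x) (abs_nonneg _) zero_le_one]

lemma abs_integral_mul_energyDensity_le {p ε : ℝ} (hp : 1 < p) (v : 𝓢(ℝ, ℝ)) {θ : ℝ → ℝ}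
    (hθ : ∀ x, |θ x| ≤ ε * |x|) :
    |∫ x, θ x * energyDensity p v x| ≤ ε * ∫ x, |x - 0| * energyDensity p v x := by
  rw [← integral_const_mul, ← norm_eq_abs]
  refine norm_integral_le_of_norm_le ((integrable_abs_sub_mul_energyDensity hp 0 v).const_mul _)
    (.of_forall fun x => ?_)
  rw [norm_mul, norm_of_nonneg (energyDensity_nonneg v (by linarith) x), sub_zero, ← mul_assoc]
  exact mul_le_mul_of_nonneg_right (hθ x) (energyDensity_nonneg v (by linarith) x)

namespace IsSolution

variable {p a b K : ℝ} {u : ℝ → 𝓢(ℝ, ℝ)} {ψ : ℝ → ℝ}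

lemma exists_abs_integral_tail_energyDensity_sub_le (hu : IsSolution p u) (hp : 1 < p)
    (hψ : IsWeight ψ) (hK : ∀ t ∈ uIcc a b, ∫ x, density p (u t) x ≤ K) (N : ℝ) {t : ℝ}
    (ht : t ∈ uIcc a b) (hNt : DecayBound N (u t)) :
    ∃ L, 0 ≤ L ∧ ∀ R, 1 ≤ R → ∀ s ∈ uIcc a b, DecayBound N (u s) →
      |(∫ x, (1 - cutoff R x) * ψ x * energyDensity p (u s) x)
        - ∫ x, (1 - cutoff R x) * ψ x * energyDensity p (u t) x| ≤ L / R * |s - t| := by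
  obtain ⟨B, hB₀, hB⟩ := hψ.exists_abs_one_sub_cutoff_mul_le
  obtain ⟨C, hC₀, hC⟩ := exists_abs_integral_mul_energyDensity_sub_le hp N
  obtain ⟨L, hL₀, hL⟩ := hu.exists_sqrt_integral_sub_sq_le hp t K
  refine ⟨C * B * L, by positivity, fun R hR s hs hNs => ?_⟩
  have hχ : ContDiff ℝ 1 (cutoff R) := (contDiff_cutoff R).of_le (by simp)
  have hχs := hasCompactSupport_cutoff (by linarith : 0 < R)
  have hχ₀ := BddContinuous.of_hasCompactSupport hχ.continuous hχs
  have hχ₁ := BddContinuous.of_hasCompactSupport (hχ.continuous_deriv le_rfl) hχs.deriv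
  have hψ₀ := hψ.bddContinuous
  have hψ₁ := hψ.bddContinuous_deriv
  have hθ₁ : BddContinuous (deriv fun x => (1 - cutoff R x) * ψ x) := by
    rw [show deriv (fun x => (1 - cutoff R x) * ψ x) = _ from funext fun x =>
      (((hχ.differentiable one_ne_zero x).hasDerivAt.const_sub 1).fun_mul (hψ.hasDerivAt x)).deriv]
    fun_prop
  have hint : ∀ τ, Integrable fun x => (1 - cutoff R x) * ψ x * energyDensity p (u τ) x :=
    fun τ => QuadDecay.integrable (by fun_prop (disch := assumption))
  rw [← integral_sub (hint s) (hint t)]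
  simp only [← mul_sub]
  calc _ ≤ C * (B / R) * √(∫ x, (u s x - u t x) ^ 2) :=
        hC _ _ hNs hNt _ ((contDiff_const.sub hχ).mul hψ.contDiff) (by fun_prop) hθ₁ _
          (fun x => (hB R hR x).1) fun x => (hB R hR x).2
    _ ≤ C * (B / R) * (L * |s - t|) := by
        gcongr
        exact hL s fun τ hτ => hK τ (uIcc_subset_uIcc ht hs hτ)
    _ = _ := by ring

/-- The energy flux involves `u_xx`, on which no bound uniform in time is available. Hence the flux
through `|x| ~ R` is controlled only pointwise in time, and the remaining tail of the energy is
differentiated on the sets of times at which the decay of `u` is bounded by a fixed integer. -/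
lemma integral_weight_mul_energy_sub (hu : IsSolution p u) (hp : 1 < p) (hψ : IsWeight ψ)
    (hK : ∀ t ∈ uIcc a b, ∫ x, density p (u t) x ≤ K)
    (hK' : ∀ t ∈ uIcc a b, moment p 0 (u t) ≤ K) :
    (∫ x, ψ x * energyDensity p (u b) x) - ∫ x, ψ x * energyDensity p (u a) x =
      -∫ t in a..b, ∫ x, deriv ψ x * energyFlux p (u t) x := by
  obtain ⟨B, hB₀, hB⟩ := hψ.exists_abs_one_sub_cutoff_mul_le
  obtain ⟨B', hB'⟩ := hψ.exists_abs_mul_deriv_cutoff_le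
  have hψ₀ := hψ.bddContinuous
  refine (hu.conservationLaw_energy hp).integral_weight_mul_sub_of_subset_iUnion hψ (C := B * K)
    (fun t => QuadDecay.integrable (by fun_prop (disch := assumption))) (fun R hR t ht => ?_)
    (F := fun n => {t ∈ uIcc a b | DecayBound n (u t)})
    (fun t ht => mem_iUnion.2 ((exists_nat_decayBound (u t)).imp fun n hn => ⟨ht, hn⟩))
    fun n t ht => ?_
  · refine (abs_integral_mul_energyDensity_le hp (u t) fun x => (hB R hR x).1).trans ?_
    rw [mul_div_right_comm]
    gcongr
    linarith [hK' t ht, moment_eq_add hp 0 (u t), integral_abs_sub_mul_sq_nonneg 0 (u t)]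
  obtain ⟨L, hL₀, hL⟩ := hu.exists_abs_integral_tail_energyDensity_sub_le hp hψ hK n ht.1 ht.2
  have hJ : Integrable (energyFlux p (u t)) := (QuadDecay.energyFlux (u t) hp).integrable
  refine ⟨L + B' * ∫ x, |energyFlux p (u t) x|, fun R hR => ⟨fun s hs => ?_, ?_⟩⟩
  · refine (hL R hR s hs.1 hs.2).trans ?_
    have hB'₀ : 0 ≤ B' := by simpa using (abs_nonneg _).trans (hB' 1 le_rfl 0).1
    have : 0 ≤ B' * ∫ x, |energyFlux p (u t) x| := by positivity
    gcongr
    linarith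
  · rw [add_div, mul_div_right_comm, ← integral_const_mul, ← norm_eq_abs]
    refine (norm_integral_le_of_norm_le (hJ.abs.const_mul (B' / R)) (.of_forall fun x => ?_)).trans
      (le_add_of_nonneg_left (by positivity))
    rw [norm_mul]
    exact mul_le_mul_of_nonneg_right (hB' R hR x).1 (abs_nonneg _)

lemma integral_energyDensity_eq (hu : IsSolution p u) (hp : 1 < p)
    (hK : ∀ t ∈ uIcc a b, ∫ x, density p (u t) x ≤ K)
    (hK' : ∀ t ∈ uIcc a b, moment p 0 (u t) ≤ K) :
    ∫ x, energyDensity p (u b) x = ∫ x, energyDensity p (u a) x := by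
  simpa [sub_eq_zero] using hu.integral_weight_mul_energy_sub hp (IsWeight.const 1) hK hK'

end IsSolution

/-! ### Solutions with bounded centred moments -/

lemma exists_mem_forall_mem_uIcc_notMem {Z : Set ℝ} (hZ : IsClosed Z) {b : ℝ} (hb : b ∈ Z)
    (c : ℝ) : ∃ a ∈ Z, ∀ t ∈ uIcc a c, t ≠ a → t ∉ Z := by
  obtain ⟨a, haZ, ha⟩ := hZ.exists_infDist_eq_dist ⟨b, hb⟩ c
  refine ⟨a, haZ, fun t ht hta htZ => ?_⟩
  have hle : |c - a| ≤ |c - t| := ha.ge.trans (Metric.infDist_le_dist_of_mem htZ)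
  rcases mem_uIcc.1 ht with ⟨h₁, h₂⟩ | ⟨h₁, h₂⟩
  · rw [abs_of_nonneg (by linarith), abs_of_nonneg (by linarith)] at hle
    exact hta (by linarith)
  · rw [abs_of_nonpos (by linarith), abs_of_nonpos (by linarith)] at hle
    exact hta (by linarith)

lemma integral_sq_pos {v : 𝓢(ℝ, ℝ)} (hv : v ≠ 0) : 0 < ∫ x, v x ^ 2 := by
  obtain ⟨y, hy⟩ := DFunLike.ne_iff.1 hv
  exact integral_pos_of_integrable_nonneg_nonzero (x := y) (v.continuous.pow 2)
    (QuadDecay.schwartz v).pow_two.integrable (fun x => sq_nonneg _) (pow_ne_zero 2 hy)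

lemma integral_density {p : ℝ} (hp : 1 < p) (v : 𝓢(ℝ, ℝ)) :
    ∫ x, density p v x = (∫ x, v x ^ 2) + ∫ x, energyDensity p v x :=
  integral_add (QuadDecay.schwartz v).pow_two.integrable (QuadDecay.energyDensity v hp).integrable

lemma integral_energyDensity_nonneg {p : ℝ} (hp : 0 < p) (v : 𝓢(ℝ, ℝ)) :
    0 ≤ ∫ x, energyDensity p v x :=
  integral_nonneg (energyDensity_nonneg v hp)

lemma abs_mul_integral_cutoff_mul_sq_le {p R : ℝ} (hp : 1 < p) (hR : 0 < R) (c : ℝ)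
    (v : 𝓢(ℝ, ℝ)) : (|c| - 2 * R) * ∫ x, cutoff R x * v x ^ 2 ≤ moment p c v := by
  have hχ := BddContinuous.of_hasCompactSupport (contDiff_cutoff R).continuous
    (hasCompactSupport_cutoff hR)
  rw [← integral_const_mul]
  refine integral_mono (QuadDecay.integrable (by fun_prop)) (integrable_abs_sub_mul_density hp c v)
    fun x => ?_
  have hv : v x ^ 2 ≤ density p v x :=
    le_add_of_nonneg_right (energyDensity_nonneg v (by linarith) x)
  calc (|c| - 2 * R) * (cutoff R x * v x ^ 2) = (|c| - 2 * R) * cutoff R x * v x ^ 2 := by ring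
    _ ≤ |x - c| * v x ^ 2 := by
        gcongr
        rcases le_or_gt (2 * R) |x| with hx | hx
        · rw [cutoff_eq_zero hR hx, mul_zero]
          positivity
        · have := abs_sub_abs_le_abs_sub c x
          rw [abs_sub_comm] at this
          nlinarith [cutoff_nonneg R x, cutoff_le_one R x, abs_nonneg (x - c)]
    _ ≤ |x - c| * density p v x := by gcongr

lemma integral_density_add_moment_zero_le {p L c : ℝ} (hp : 1 < p) (hc : |c| ≤ L) (v : 𝓢(ℝ, ℝ)) :
    (∫ x, density p v x) + moment p 0 v ≤
      (2 + L) * (moment p c v + ∫ x, cutoff (L + 1) x * density p v x) := by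
  have hL : 0 ≤ L := (abs_nonneg c).trans hc
  have hint := (QuadDecay.density v hp).integrable
  have hmom := fun c => integrable_abs_sub_mul_density hp c v
  have hcut : Integrable fun x => cutoff (L + 1) x * density p v x :=
    integrable_mul_of_hasCompactSupport (contDiff_cutoff _).continuous
      (hasCompactSupport_cutoff (by linarith)) (QuadDecay.density v hp).continuous
  unfold moment
  rw [← integral_add hint (hmom 0), ← integral_add (hmom c) hcut, ← integral_const_mul]
  refine integral_mono (hint.add (hmom 0)) (((hmom c).add hcut).const_mul _) fun x => ?_
  have hx : 1 + |x| ≤ (2 + L) * (|x - c| + cutoff (L + 1) x) := by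
    rcases le_or_gt |x| (L + 1) with hx | hx
    · rw [cutoff_eq_one hx]
      nlinarith [abs_nonneg (x - c)]
    · have := abs_sub_abs_le_abs_sub x c
      nlinarith [cutoff_nonneg (L + 1) x]
  simp only [sub_zero]
  linarith [mul_le_mul_of_nonneg_right hx (density_nonneg v (by linarith : 0 < p) x)]

namespace IsSolution

variable {p a b C t₀ : ℝ} {u : ℝ → 𝓢(ℝ, ℝ)} {x₀ : ℝ → ℝ}

lemma exists_eventually_abs_centre_le (hu : IsSolution p u) (hp : 1 < p)
    (hC : ∀ t, moment p (x₀ t) (u t) ≤ C) (ht₀ : u t₀ ≠ 0) :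
    ∃ L, ∀ᶠ t in 𝓝 t₀, |x₀ t| ≤ L := by
  obtain ⟨R, hm, hR⟩ := (((tendsto_integral_cutoff_mul
    (QuadDecay.schwartz (u t₀)).pow_two.integrable).eventually (lt_mem_nhds
      (half_lt_self (integral_sq_pos ht₀)))).and (eventually_gt_atTop 0)).exists
  set m := (∫ x, u t₀ x ^ 2) / 2
  have hm₀ : 0 < m := half_pos (integral_sq_pos ht₀)
  have hcont : Continuous fun t => ∫ x, cutoff R x * u t x ^ 2 :=
    continuous_integral_mul (contDiff_cutoff R).continuous (hasCompactSupport_cutoff hR)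
      (hu.contDiff.continuous.pow 2)
  refine ⟨2 * R + |C| / m, ?_⟩
  filter_upwards [hcont.continuousAt.eventually (lt_mem_nhds hm)] with t ht
  rw [← sub_le_iff_le_add', le_div_iff₀ hm₀]
  rcases le_or_gt (|x₀ t| - 2 * R) 0 with h | h
  · exact (mul_nonpos_of_nonpos_of_nonneg h hm₀.le).trans (abs_nonneg C)
  · calc (|x₀ t| - 2 * R) * m ≤ (|x₀ t| - 2 * R) * ∫ x, cutoff R x * u t x ^ 2 := by gcongr
      _ ≤ moment p (x₀ t) (u t) := abs_mul_integral_cutoff_mul_sq_le hp hR _ _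
      _ ≤ |C| := (hC t).trans (le_abs_self C)

lemma exists_eventually_integral_density_add_moment_le (hu : IsSolution p u) (hp : 1 < p)
    (hC : ∀ t, moment p (x₀ t) (u t) ≤ C) (ht₀ : u t₀ ≠ 0) :
    ∃ K, ∀ᶠ t in 𝓝 t₀, (∫ x, density p (u t) x) + moment p 0 (u t) ≤ K := by
  obtain ⟨L, hL⟩ := hu.exists_eventually_abs_centre_le hp hC ht₀
  have hL₀ : 0 ≤ L := (abs_nonneg _).trans hL.self_of_nhds
  have hcont : Continuous fun t => ∫ x, cutoff (L + 1) x * density p (u t) x :=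
    continuous_integral_mul (contDiff_cutoff _).continuous (hasCompactSupport_cutoff (by linarith))
      ((hu.conservationLaw_mass hp).continuous_density.add
        (hu.conservationLaw_energy hp).continuous_density)
  refine ⟨(2 + L) * (C + ((∫ x, cutoff (L + 1) x * density p (u t₀) x) + 1)), ?_⟩
  filter_upwards [hL, hcont.continuousAt.eventually (gt_mem_nhds (lt_add_one _))] with t ht ht'
  refine (integral_density_add_moment_zero_le hp ht (u t)).trans ?_
  gcongr
  exact hC t

lemma exists_integral_density_add_moment_le (hu : IsSolution p u) (hp : 1 < p)
    (hC : ∀ t, moment p (x₀ t) (u t) ≤ C) {I : Set ℝ} (hI : IsCompact I) (hne : ∀ t ∈ I, u t ≠ 0) :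
    ∃ K, ∀ t ∈ I, (∫ x, density p (u t) x) + moment p 0 (u t) ≤ K := by
  refine hI.induction_on
    (p := fun I => ∃ K, ∀ t ∈ I, (∫ x, density p (u t) x) + moment p 0 (u t) ≤ K)
    ⟨0, by simp⟩ (fun s t hst ⟨K, hK⟩ => ⟨K, fun τ hτ => hK τ (hst hτ)⟩) ?_ fun t ht => ?_
  · rintro s t ⟨K, hK⟩ ⟨K', hK'⟩
    refine ⟨max K K', fun τ hτ => hτ.elim (fun h => ?_) fun h => ?_⟩
    exacts [(hK τ h).trans (le_max_left _ _), (hK' τ h).trans (le_max_right _ _)]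
  · obtain ⟨K, hK⟩ := hu.exists_eventually_integral_density_add_moment_le hp hC (hne t ht)
    exact ⟨_, mem_nhdsWithin_of_mem_nhds hK, K, fun _ h => h⟩

lemma exists_density_le_and_moment_le (hu : IsSolution p u) (hp : 1 < p)
    (hC : ∀ t, moment p (x₀ t) (u t) ≤ C) (hne : ∀ t ∈ uIcc a b, u t ≠ 0) :
    ∃ K, (∀ t ∈ uIcc a b, ∫ x, density p (u t) x ≤ K) ∧
      ∀ t ∈ uIcc a b, moment p 0 (u t) ≤ K := by
  obtain ⟨K, hK⟩ := hu.exists_integral_density_add_moment_le hp hC isCompact_uIcc hne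
  have hp₀ : 0 < p := by linarith
  refine ⟨K, fun t ht => ?_, fun t ht => ?_⟩
  · have : 0 ≤ moment p 0 (u t) :=
      integral_nonneg fun x => mul_nonneg (abs_nonneg _) (density_nonneg (u t) hp₀ x)
    linarith [hK t ht]
  · have : 0 ≤ ∫ x, density p (u t) x := integral_nonneg (density_nonneg (u t) hp₀)
    linarith [hK t ht]

lemma ne_zero (hu : IsSolution p u) (hp : 1 < p) (hC : ∀ t, moment p (x₀ t) (u t) ≤ C)
    (ht₀ : u t₀ ≠ 0) (t : ℝ) : u t ≠ 0 := by
  intro hzero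
  have hclosed : IsClosed {t | u t = 0} := by
    simp only [DFunLike.ext_iff, ofPred_forall]
    exact isClosed_iInter fun y => isClosed_eq
      (hu.contDiff.continuous.comp (by fun_prop : Continuous fun t : ℝ => (t, y))) continuous_const
  obtain ⟨a, ha : u a = 0, hne⟩ := exists_mem_forall_mem_uIcc_notMem hclosed hzero t₀
  have hdensity : ∀ s ∈ uIcc a t₀, ∫ x, density p (u s) x ≤ ∫ x, density p (u t₀) x := by
    intro s hs
    rcases eq_or_ne s a with rfl | hsa
    · have hzero_density : ∀ x, density p (u s) x = 0 := fun x => by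
        simp [ha, density, energyDensity, potential, zero_rpow (by linarith : p + 1 ≠ 0)]
      simpa only [hzero_density, integral_zero] using
        integral_nonneg (density_nonneg (u t₀) (by linarith : 0 < p))
    · obtain ⟨K, hK, hK'⟩ := hu.exists_density_le_and_moment_le (a := s) (b := t₀) hp hC
        fun τ hτ => hne τ (uIcc_subset_uIcc_right hs hτ) fun h => hsa (by
          subst h; exact eq_of_mem_uIcc_of_mem_uIcc hs hτ)
      rw [integral_density hp, integral_density hp, hu.integral_sq_eq hp hK,
        hu.integral_energyDensity_eq hp hK hK']
  have hmass := hu.integral_sq_eq hp hdensity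
  simp only [ha, zero_apply, zero_pow two_ne_zero, integral_zero] at hmass
  exact (integral_sq_pos ht₀).ne' hmass

end IsSolution

/-! ### The two currents compared -/

section Virial

variable {p : ℝ} (v : 𝓢(ℝ, ℝ))

lemma integral_mul_deriv_deriv : ∫ x, v x * ∂ (∂ v) x = -∫ x, ∂ v x ^ 2 := by
  rw [← integral_neg]
  refine integral_eq_integral_of_hasDerivAt_sub (G := fun x => v x * ∂ v x)
    (QuadDecay.integrable (by fun_prop)) (QuadDecay.integrable (by fun_prop))
    (QuadDecay.integrable (by fun_prop)) fun x => ?_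
  exact ((hasDerivAt_schwartz v x).fun_mul (hasDerivAt_schwartz (∂ v) x)).congr_deriv (by ring)

lemma integral_nonlin_mul_deriv_deriv_nonpos (hp : 1 < p) :
    ∫ x, nonlin p (v x) * ∂ (∂ v) x ≤ 0 := by
  have hparts : ∫ x, nonlin p (v x) * ∂ (∂ v) x =
      ∫ x, -((velocity p v x + ∂ (∂ (∂ v)) x) * ∂ v x) :=
    integral_eq_integral_of_hasDerivAt_sub (G := fun x => nonlin p (v x) * ∂ v x)
      (QuadDecay.integrable (by fun_prop (disch := assumption)))
      (QuadDecay.integrable (by fun_prop (disch := assumption)))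
      (QuadDecay.integrable (by fun_prop (disch := assumption))) fun x =>
        (((hasDerivAt_nonlin hp (v x)).comp x (hasDerivAt_schwartz v x)).fun_mul
          (hasDerivAt_schwartz (∂ v) x)).congr_deriv (by simp only [velocity, Function.comp]; ring)
  rw [hparts]
  refine integral_nonpos fun x => neg_nonpos.2 ?_
  rw [velocity, neg_add_cancel_comm, mul_assoc, ← sq]
  positivity

lemma integral_massFlux (hp : 1 < p) :
    ∫ x, massFlux p v x = 3 * (∫ x, ∂ v x ^ 2) + 2 * p * ∫ x, potential p (v x) := by
  have h := integral_mul_massFlux v hp (z := fun _ => 1) contDiff_const (.const 1)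
    (by simpa using BddContinuous.const 0)
  simp only [deriv_const', one_mul, mul_zero, zero_mul, add_zero] at h
  rw [h, integral_add (QuadDecay.integrable (by fun_prop))
    (QuadDecay.integrable (by fun_prop (disch := assumption))), integral_const_mul,
    integral_const_mul]

lemma integral_energyDensity (hp : 1 < p) :
    ∫ x, energyDensity p v x = 1 / 2 * (∫ x, ∂ v x ^ 2) + ∫ x, potential p (v x) := by
  simp only [energyDensity]
  rw [integral_add (QuadDecay.integrable (by fun_prop))
    (QuadDecay.integrable (by fun_prop (disch := assumption))), integral_const_mul]

lemma half_integral_sq_le_integral_energyFlux (hp : 1 < p) :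
    1 / 2 * ∫ x, (nonlin p (v x) - √3 * ∂ (∂ v) x) ^ 2 ≤ ∫ x, energyFlux p v x := by
  have h := integral_mul_energyFlux v hp (z := fun _ => 1) contDiff_const (.const 1)
    (by simpa using BddContinuous.const 0) (by simpa using BddContinuous.const 0)
  simp only [deriv_const', one_mul, zero_mul, add_zero] at h
  have hsq : (√3) ^ 2 = 3 := sq_sqrt (by norm_num)
  have hsplit : ∀ x, 3 / 2 * ∂ (∂ v) x ^ 2 - 2 * ∂ (∂ v) x * nonlin p (v x)
      + 1 / 2 * nonlin p (v x) ^ 2 = 1 / 2 * (nonlin p (v x) - √3 * ∂ (∂ v) x) ^ 2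
        - (2 - √3) * (nonlin p (v x) * ∂ (∂ v) x) := fun x => by
    linear_combination -(1 / 2 * ∂ (∂ v) x ^ 2) * hsq
  have hs : √3 ≤ 2 := sqrt_le_iff.2 (by norm_num)
  simp only [h, hsplit]
  rw [integral_sub (QuadDecay.integrable (by fun_prop (disch := assumption)))
    (QuadDecay.integrable (by fun_prop (disch := assumption))), integral_const_mul,
    integral_const_mul]
  nlinarith [integral_nonlin_mul_deriv_deriv_nonpos v hp]

lemma integral_mul_nonlin_sub (hp : 1 < p) (s : ℝ) :
    ∫ x, v x * (nonlin p (v x) - s * ∂ (∂ v) x) =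
      s * (∫ x, ∂ v x ^ 2) + (p + 1) * ∫ x, potential p (v x) := by
  have hsplit : ∀ x, v x * (nonlin p (v x) - s * ∂ (∂ v) x) =
      (p + 1) * potential p (v x) - s * (v x * ∂ (∂ v) x) := fun x => by
    rw [← mul_nonlin (by linarith : p + 1 ≠ 0)]
    ring
  simp only [hsplit]
  rw [integral_sub (QuadDecay.integrable (by fun_prop (disch := assumption)))
    (QuadDecay.integrable (by fun_prop)), integral_const_mul, integral_const_mul,
    integral_mul_deriv_deriv]
  ring

lemma one_lt_of_sqrt_three_le (hp : √3 ≤ p) : 1 < p :=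
  (lt_sqrt_of_sq_lt (by norm_num)).trans_le hp

/-- In the comparison the coefficient of `(∫ v'²)²` cancels, and `p ≥ √3` is exactly what makes the
coefficient of `(∫ v'²) (∫ potential p v)` nonnegative. -/
lemma half_mul_sq_integral_potential_le (hp : √3 ≤ p) :
    1 / 2 * (p - 1) ^ 2 * (∫ x, potential p (v x)) ^ 2 ≤
      (∫ x, v x ^ 2) * (∫ x, energyFlux p v x)
        - (∫ x, energyDensity p v x) * ∫ x, massFlux p v x := by
  have hp₁ := one_lt_of_sqrt_three_le hp
  have hCS := sq_integral_mul_le (QuadDecay.schwartz v).memLp_two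
    (g := fun x => nonlin p (v x) - √3 * ∂ (∂ v) x)
    (QuadDecay.memLp_two (by fun_prop (disch := assumption)))
  have hJ := mul_le_mul_of_nonneg_left (half_integral_sq_le_integral_energyFlux v hp₁)
    (integral_nonneg fun x => sq_nonneg (v x) : 0 ≤ ∫ x, v x ^ 2)
  rw [integral_mul_nonlin_sub v hp₁] at hCS
  rw [integral_massFlux v hp₁, integral_energyDensity v hp₁]
  set A := ∫ x, ∂ v x ^ 2
  set F := ∫ x, potential p (v x)
  have hAF : 0 ≤ A * F := mul_nonneg (integral_nonneg fun x => sq_nonneg _)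
    (integral_nonneg fun x => potential_nonneg (by linarith) _)
  have hsq : (√3) ^ 2 = 3 := sq_sqrt (by norm_num)
  have hcoeff : 0 ≤ √3 * (p + 1) - p - 3 := by
    nlinarith [mul_nonneg (sub_nonneg.2 (one_lt_of_sqrt_three_le le_rfl).le) (sub_nonneg.2 hp)]
  calc 1 / 2 * (p - 1) ^ 2 * F ^ 2
      ≤ 1 / 2 * (p - 1) ^ 2 * F ^ 2 + (√3 * (p + 1) - p - 3) * (A * F) :=
        le_add_of_nonneg_right (mul_nonneg hcoeff hAF)
    _ = 1 / 2 * (√3 * A + (p + 1) * F) ^ 2 - (1 / 2 * A + F) * (3 * A + 2 * p * F) := by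
        linear_combination -(1 / 2 * A ^ 2) * hsq
    _ ≤ _ := by linarith

end Virial

/-! ### Concentration forces a lower bound for the potential energy -/

lemma sq_le_div_mul_potential {p δ y : ℝ} (hp : 1 < p) (hδ : 0 < δ) (hy : δ ≤ |y|) :
    y ^ 2 ≤ (p + 1) / δ ^ (p - 1) * potential p y := by
  rw [div_mul_eq_mul_div, ← mul_nonlin (by linarith : p + 1 ≠ 0), le_div_iff₀ (by positivity),
    nonlin, mul_left_comm, ← sq, mul_comm]
  gcongr

lemma integral_sq_le_add_add {p L δ : ℝ} (hp : 1 < p) (hL : 0 < L) (hδ : 0 < δ) (c : ℝ)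
    (v : 𝓢(ℝ, ℝ)) : ∫ x, v x ^ 2 ≤
      moment p c v / L + 2 * L * δ ^ 2 + (p + 1) / δ ^ (p - 1) * ∫ x, potential p (v x) := by
  set I := Icc (c - L) (c + L)
  have hI : Integrable (I.indicator fun _ => δ ^ 2) :=
    (integrable_indicator_iff measurableSet_Icc).2 continuousOn_const.integrableOn_Icc
  have hmom := (integrable_abs_sub_mul_density hp c v).div_const L
  have hpot := (QuadDecay.potential hp (.schwartz v)).integrable.const_mul ((p + 1) / δ ^ (p - 1))
  have hsum : Integrable fun x => |x - c| * density p v x / L + I.indicator (fun _ => δ ^ 2) x :=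
    hmom.add hI
  have hδI : 2 * L * δ ^ 2 = ∫ x, I.indicator (fun _ => δ ^ 2) x := by
    rw [integral_indicator measurableSet_Icc, setIntegral_const,
      volume_real_Icc_of_le (by linarith), smul_eq_mul]
    ring
  rw [moment, ← integral_div, hδI, ← integral_const_mul, ← integral_add hmom hI,
    ← integral_add hsum hpot]
  refine integral_mono (QuadDecay.schwartz v).pow_two.integrable (hsum.add hpot)
    fun x => ?_
  have hmom₀ : 0 ≤ |x - c| * density p v x / L :=
    div_nonneg (mul_nonneg (abs_nonneg _) (density_nonneg v (by linarith) x)) hL.le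
  have hI₀ : 0 ≤ I.indicator (fun _ => δ ^ 2) x := indicator_nonneg (fun _ _ => sq_nonneg δ) x
  have hpot₀ : 0 ≤ (p + 1) / δ ^ (p - 1) * potential p (v x) :=
    mul_nonneg (by positivity) (potential_nonneg (by linarith) _)
  rcases le_or_gt δ |v x| with hv | hv
  · linarith [sq_le_div_mul_potential hp hδ hv]
  rcases le_or_gt |x - c| L with hx | hx
  · have hxI : x ∈ I := ⟨by linarith [(abs_le.1 hx).1], by linarith [(abs_le.1 hx).2]⟩
    have : v x ^ 2 ≤ δ ^ 2 := sq_le_sq' (by linarith [(abs_lt.1 hv).1]) (abs_lt.1 hv).2.le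
    simp only [indicator_of_mem hxI] at *
    linarith
  · have : v x ^ 2 ≤ |x - c| * density p v x / L := by
      rw [le_div_iff₀' hL]
      exact mul_le_mul hx.le (le_add_of_nonneg_right (energyDensity_nonneg v (by linarith) x))
        (sq_nonneg _) (abs_nonneg _)
    linarith

lemma exists_pos_le_integral_potential {p M : ℝ} (hp : 1 < p) (hM : 0 < M) (C : ℝ) :
    ∃ φ, 0 < φ ∧ ∀ (c : ℝ) (v : 𝓢(ℝ, ℝ)), moment p c v ≤ C → ∫ x, v x ^ 2 = M →
      φ ≤ ∫ x, potential p (v x) := by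
  set L := 2 * max C 1 / M
  have hL : 0 < L := by positivity
  set δ := √(M / (8 * L))
  have hδ : 0 < δ := sqrt_pos.2 (by positivity)
  have hδ₂ : 2 * L * δ ^ 2 = M / 4 := by
    rw [sq_sqrt (by positivity)]
    field_simp
    norm_num
  refine ⟨M / 4 / ((p + 1) / δ ^ (p - 1)), by positivity, fun c v hC hv => ?_⟩
  have hCL : moment p c v / L ≤ M / 2 :=
    calc moment p c v / L ≤ max C 1 / L := by
          gcongr
          exact hC.trans (le_max_left _ _)
      _ = M / 2 := by simp only [L]; field_simp
  rw [div_le_iff₀' (by positivity)]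
  linarith [integral_sq_le_add_add hp hL hδ c v]

/-! ### The difference of the two centres -/

/-- The truncation `x ↦ ∫₀ˣ cutoff R` of the identity at scale `R`. -/
noncomputable def truncatedId (R x : ℝ) : ℝ := ∫ y in 0..x, cutoff R y

lemma hasDerivAt_truncatedId (R x : ℝ) : HasDerivAt (truncatedId R) (cutoff R x) x :=
  (contDiff_cutoff R).continuous.integral_hasStrictDerivAt 0 x |>.hasDerivAt

lemma deriv_truncatedId (R : ℝ) : deriv (truncatedId R) = cutoff R :=
  funext fun x => (hasDerivAt_truncatedId R x).deriv

lemma isWeight_truncatedId {R : ℝ} (hR : 0 < R) : IsWeight (truncatedId R) where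
  contDiff := contDiff_one_iff_deriv.2 ⟨fun x => (hasDerivAt_truncatedId R x).differentiableAt,
    deriv_truncatedId R ▸ (contDiff_cutoff R).continuous⟩
  bounded := by
    have hint := (contDiff_cutoff R).continuous.integrable_of_hasCompactSupport (μ := volume)
      (hasCompactSupport_cutoff hR)
    refine ⟨∫ x, |cutoff R x|, fun x => ?_⟩
    rw [← norm_eq_abs, truncatedId]
    exact intervalIntegral.norm_integral_le_integral_norm_uIoc.trans
      (setIntegral_le_integral hint.norm (.of_forall fun _ => norm_nonneg _))
  hasCompactSupport_deriv := deriv_truncatedId R ▸ hasCompactSupport_cutoff hR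

lemma abs_truncatedId_sub_le (R x y : ℝ) : |truncatedId R x - truncatedId R y| ≤ |x - y| := by
  simpa using convex_univ.norm_image_sub_le_of_norm_hasDerivWithin_le (C := 1)
    (fun z _ => (hasDerivAt_truncatedId R z).hasDerivWithinAt) (fun z _ => abs_cutoff_le_one R z)
    (mem_univ y) (mem_univ x)

section CentreDifference

variable {p : ℝ} {ψ : ℝ → ℝ}

lemma abs_integral_sub_mul_le {g : ℝ → ℝ} {c : ℝ} (hψ : ∀ x y, |ψ x - ψ y| ≤ |x - y|)
    (hg : ∀ x, 0 ≤ g x) (hint : Integrable fun x => |x - c| * g x) :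
    |∫ x, (ψ x - ψ c) * g x| ≤ ∫ x, |x - c| * g x := by
  rw [← norm_eq_abs]
  refine norm_integral_le_of_norm_le hint (.of_forall fun x => ?_)
  rw [norm_mul, norm_of_nonneg (hg x)]
  exact mul_le_mul_of_nonneg_right (hψ x c) (hg x)

/-- The left-hand side is unchanged when a constant is added to `ψ`. -/
lemma abs_integral_mul_integral_sub_le (hp : 1 < p) (hψ : BddContinuous ψ)
    (hψ' : ∀ x y, |ψ x - ψ y| ≤ |x - y|) (c : ℝ) (v : 𝓢(ℝ, ℝ)) :
    |(∫ x, energyDensity p v x) * (∫ x, ψ x * v x ^ 2)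
        - (∫ x, v x ^ 2) * ∫ x, ψ x * energyDensity p v x| ≤
      (∫ x, density p v x) * moment p c v := by
  have hrecentre : ∀ {g : ℝ → ℝ}, QuadDecay g →
      ∫ x, (ψ x - ψ c) * g x = (∫ x, ψ x * g x) - ψ c * ∫ x, g x := fun hg => by
    simp only [sub_mul]
    rw [integral_sub (QuadDecay.mul hψ hg).integrable (hg.integrable.const_mul _),
      integral_const_mul]
  have hsq := abs_integral_sub_mul_le hψ' (fun x => sq_nonneg (v x))
    (integrable_abs_sub_mul_sq c v)
  have hen := abs_integral_sub_mul_le hψ' (energyDensity_nonneg v (by linarith))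
    (integrable_abs_sub_mul_energyDensity hp c v)
  rw [hrecentre (QuadDecay.schwartz v).pow_two] at hsq
  rw [hrecentre (QuadDecay.energyDensity v hp)] at hen
  have hM : 0 ≤ ∫ x, v x ^ 2 := integral_nonneg fun x => sq_nonneg _
  have hE := integral_energyDensity_nonneg (zero_lt_one.trans hp) v
  rw [integral_density hp, moment_eq_add hp]
  calc _ = |(∫ x, energyDensity p v x) * ((∫ x, ψ x * v x ^ 2) - ψ c * ∫ x, v x ^ 2)
        - (∫ x, v x ^ 2) *
          ((∫ x, ψ x * energyDensity p v x) - ψ c * ∫ x, energyDensity p v x)| := by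
        congr 1
        ring
    _ ≤ (∫ x, energyDensity p v x) * (∫ x, |x - c| * v x ^ 2)
        + (∫ x, v x ^ 2) * ∫ x, |x - c| * energyDensity p v x := by
        refine (abs_sub _ _).trans ?_
        rw [abs_mul, abs_mul, abs_of_nonneg hE, abs_of_nonneg hM]
        gcongr
    _ ≤ _ := by
        nlinarith [mul_nonneg hM (integral_abs_sub_mul_sq_nonneg c v),
          mul_nonneg hE (integral_abs_sub_mul_energyDensity_nonneg (zero_lt_one.trans hp) c v)]

end CentreDifference

section LowerBound

variable {p : ℝ}

lemma integral_nonlin_sq_le (hp : 1 < p) (v : 𝓢(ℝ, ℝ)) :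
    ∫ x, nonlin p (v x) ^ 2 ≤
      (√(2 * ∫ x, density p v x) ^ (p - 1)) ^ 2 * ∫ x, v x ^ 2 := by
  rw [← integral_const_mul]
  refine integral_mono (QuadDecay.integrable (by fun_prop (disch := assumption)))
    (QuadDecay.integrable (by fun_prop)) fun x => ?_
  rw [← sq_abs (nonlin p (v x)), ← sq_abs (v x), ← mul_pow]
  gcongr
  exact abs_nonlin_le hp.le (abs_le_sqrt (sq_le_two_mul_integral_density v hp x))

lemma neg_le_integral_mul_energyFlux (hp : 1 < p) (v : 𝓢(ℝ, ℝ)) {z : ℝ → ℝ} {ε : ℝ}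
    (hz : ContDiff ℝ 2 z) (hz₀ : ∀ x, 0 ≤ z x) (hz₁ : ∀ x, z x ≤ 1)
    (hz' : BddContinuous (deriv z)) (hε : ∀ x, |deriv (deriv z) x| ≤ ε) :
    -(1 / 6 * (∫ x, nonlin p (v x) ^ 2) + ε * ∫ x, energyDensity p v x) ≤
      ∫ x, z x * energyFlux p v x := by
  have hzb : BddContinuous z := ⟨hz.continuous, 1, fun x => abs_le.2 ⟨by linarith [hz₀ x], hz₁ x⟩⟩
  have hz'' : BddContinuous (deriv (deriv z)) :=
    ⟨((contDiff_succ_iff_deriv (n := 1)).1 hz).2.2.continuous_deriv le_rfl, ε, hε⟩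
  rw [integral_mul_energyFlux v hp hz hzb hz' hz'', ← integral_const_mul, ← integral_const_mul,
    ← integral_add (QuadDecay.integrable (by fun_prop (disch := assumption)))
      (QuadDecay.integrable (by fun_prop (disch := assumption))), ← integral_neg]
  refine integral_mono (QuadDecay.integrable (by fun_prop (disch := assumption)))
    (QuadDecay.integrable (by fun_prop (disch := assumption))) fun x => ?_
  have hquad : -(1 / 6 * nonlin p (v x) ^ 2) ≤ 3 / 2 * ∂ (∂ v) x ^ 2
      - 2 * ∂ (∂ v) x * nonlin p (v x) + 1 / 2 * nonlin p (v x) ^ 2 := by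
    nlinarith [sq_nonneg (∂ (∂ v) x - 2 / 3 * nonlin p (v x))]
  have hF := potential_nonneg (by linarith : 0 < p) (v x)
  have hpot : |potential p (v x) - 1 / 2 * ∂ v x ^ 2| ≤ energyDensity p v x := by
    rw [abs_le, energyDensity]
    constructor <;> linarith [sq_nonneg (∂ v x)]
  have hcurv := (abs_le.1 ((abs_mul _ _).trans_le
    (mul_le_mul (hε x) hpot (abs_nonneg _) ((abs_nonneg _).trans (hε x))))).1
  beta_reduce
  nlinarith [mul_le_mul_of_nonneg_left hquad (hz₀ x),
    mul_nonneg (sub_nonneg.2 (hz₁ x)) (sq_nonneg (nonlin p (v x)))]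

lemma exists_neg_le_comparison (hp : 1 < p) (M E : ℝ) :
    ∃ A, ∀ v : 𝓢(ℝ, ℝ), ∫ x, v x ^ 2 = M → ∫ x, energyDensity p v x = E → ∀ R, 1 ≤ R →
      -A ≤ M * (∫ x, cutoff R x * energyFlux p v x) - E * ∫ x, cutoff R x * massFlux p v x := by
  obtain ⟨B, hB₁, hB⟩ := exists_abs_deriv_cutoff_le
  refine ⟨M * (1 / 6 * ((√(2 * (M + E)) ^ (p - 1)) ^ 2 * M) + B * E)
    + E * ((8 + 2 * p) * B * (M + E)), fun v hM hE R hR => ?_⟩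
  have hM₀ : 0 ≤ M := hM ▸ integral_nonneg fun x => sq_nonneg _
  have hE₀ : 0 ≤ E := hE ▸ integral_energyDensity_nonneg (by linarith) v
  have hBR : B / R ≤ B := div_le_self (by linarith) hR
  have hχ := contDiff_cutoff R
  have hχ' : ∀ x, |deriv (cutoff R) x| ≤ B := fun x => (hB R hR x).1.trans hBR
  have hdensity : ∫ x, density p v x = M + E := by rw [integral_density hp, hM, hE]
  have hnonlin := integral_nonlin_sq_le hp v
  have hJ := neg_le_integral_mul_energyFlux hp v (contDiff_infty.1 hχ 2) (cutoff_nonneg R)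
    (cutoff_le_one R) ⟨hχ.continuous_deriv (by simp), B, hχ'⟩
    fun x => (hB R hR x).2.trans hBR
  have hσ := (abs_le.1 (abs_integral_mul_massFlux_le v hp (hχ.of_le (by simp))
    (fun x => (abs_cutoff_le_one R x).trans hB₁) hχ')).2
  rw [hdensity, hM] at hnonlin
  rw [hdensity] at hσ
  rw [hE] at hJ
  have hJ' : -(1 / 6 * ((√(2 * (M + E)) ^ (p - 1)) ^ 2 * M) + B * E) ≤
      ∫ x, cutoff R x * energyFlux p v x := by linarith
  linarith [mul_le_mul_of_nonneg_left hJ' hM₀, mul_le_mul_of_nonneg_left hσ hE₀]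

end LowerBound

/-- A form of Fatou's lemma: truncating `G R` at the height `c` makes it dominated. -/
lemma mul_le_of_tendsto_of_intervalIntegral_le {G : ℝ → ℝ → ℝ} {l : ℝ → ℝ} {A c D T : ℝ}
    (hT : 0 ≤ T) (hcont : ∀ R, 1 ≤ R → Continuous (G R)) (hlow : ∀ R, 1 ≤ R → ∀ t, -A ≤ G R t)
    (hint : ∀ R, 1 ≤ R → ∫ t in 0..T, G R t ≤ D)
    (hlim : ∀ t, Tendsto (fun R => G R t) atTop (𝓝 (l t))) (hl : ∀ t, c ≤ l t) : T * c ≤ D := by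
  have hdom : Tendsto (fun R => ∫ t in 0..T, min (G R t) c) atTop (𝓝 (∫ _ in 0..T, c)) := by
    refine intervalIntegral.tendsto_integral_filter_of_dominated_convergence
      (fun _ => max |A| |c|) ?_ ?_ (by simp) (.of_forall fun t _ => ?_)
    · filter_upwards [eventually_ge_atTop 1] with R hR
      exact ((hcont R hR).min continuous_const).aestronglyMeasurable
    · filter_upwards [eventually_ge_atTop 1] with R hR
      refine .of_forall fun t _ => abs_le.2 ⟨?_, ?_⟩
      · rw [neg_le, ← max_neg_neg]
        exact max_le_max ((neg_le.1 (hlow R hR t)).trans (le_abs_self A)) (neg_le_abs c)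
      · exact (min_le_right _ _).trans ((le_abs_self c).trans (le_max_right _ _))
    · simpa [hl t] using (hlim t).min (tendsto_const_nhds (x := c))
  rw [intervalIntegral.integral_const, sub_zero, smul_eq_mul] at hdom
  refine le_of_tendsto hdom ?_
  filter_upwards [eventually_ge_atTop 1] with R hR
  refine (intervalIntegral.integral_mono_on hT ?_ ?_ fun t _ => min_le_left _ _).trans (hint R hR)
  · exact ((hcont R hR).min continuous_const).intervalIntegrable _ _
  · exact (hcont R hR).intervalIntegrable _ _

namespace IsSolution

variable {p : ℝ} {u : ℝ → 𝓢(ℝ, ℝ)} {x₀ : ℝ → ℝ} {C : ℝ}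

lemma integral_sq_eq_and_integral_energyDensity_eq (hu : IsSolution p u) (hp : 1 < p)
    (hC : ∀ t, moment p (x₀ t) (u t) ≤ C) (hne : ∀ t, u t ≠ 0) (t : ℝ) :
    ∫ x, u t x ^ 2 = ∫ x, u 0 x ^ 2 ∧
      ∫ x, energyDensity p (u t) x = ∫ x, energyDensity p (u 0) x := by
  obtain ⟨K, hK, hK'⟩ := hu.exists_density_le_and_moment_le hp hC (a := 0) (b := t)
    fun s _ => hne s
  exact ⟨hu.integral_sq_eq hp hK, hu.integral_energyDensity_eq hp hK hK'⟩

lemma intervalIntegral_comparison_le (hu : IsSolution p u) (hp : 1 < p)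
    (hC : ∀ t, moment p (x₀ t) (u t) ≤ C) (hne : ∀ t, u t ≠ 0) {R : ℝ} (hR : 0 < R) (T : ℝ) :
    ∫ t in 0..T, ((∫ x, u 0 x ^ 2) * (∫ x, cutoff R x * energyFlux p (u t) x)
      - (∫ x, energyDensity p (u 0) x) * ∫ x, cutoff R x * massFlux p (u t) x) ≤
      2 * ((∫ x, density p (u 0) x) * C) := by
  obtain ⟨K, hK, hK'⟩ := hu.exists_density_le_and_moment_le hp hC (a := 0) (b := T)
    fun s _ => hne s
  have hψ := isWeight_truncatedId hR
  have hmass := hu.integral_weight_mul_mass_sub hp hψ hK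
  have henergy := hu.integral_weight_mul_energy_sub hp hψ hK hK'
  have hχ := (contDiff_cutoff R).continuous
  have hχs := hasCompactSupport_cutoff hR
  have hbound : ∀ t, |(∫ x, energyDensity p (u 0) x) * (∫ x, truncatedId R x * u t x ^ 2)
      - (∫ x, u 0 x ^ 2) * ∫ x, truncatedId R x * energyDensity p (u t) x| ≤
      (∫ x, density p (u 0) x) * C := fun t => by
    obtain ⟨hM, hE⟩ := hu.integral_sq_eq_and_integral_energyDensity_eq hp hC hne t
    have h := abs_integral_mul_integral_sub_le hp hψ.bddContinuous (abs_truncatedId_sub_le R)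
      (x₀ t) (u t)
    rw [integral_density hp, hM, hE, ← integral_density hp] at h
    exact h.trans (mul_le_mul_of_nonneg_left (hC t)
      (integral_nonneg (density_nonneg _ (by linarith))))
  rw [deriv_truncatedId] at hmass henergy
  rw [intervalIntegral.integral_sub, intervalIntegral.integral_const_mul,
    intervalIntegral.integral_const_mul]
  · linear_combination (abs_le.1 (hbound T)).2 + (abs_le.1 (hbound 0)).1
      + (∫ x, u 0 x ^ 2) * henergy - (∫ x, energyDensity p (u 0) x) * hmass
  · exact (((hu.conservationLaw_energy hp).continuous_integral_mul_flux hχ hχs).const_mul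
      _).intervalIntegrable _ _
  · exact (((hu.conservationLaw_mass hp).continuous_integral_mul_flux hχ hχs).const_mul
      _).intervalIntegrable _ _

theorem exists_lt_moment (hu : IsSolution p u) (hp : √3 ≤ p) {t₀ : ℝ} (ht₀ : u t₀ ≠ 0)
    (x₀ : ℝ → ℝ) (C : ℝ) : ∃ t, C < moment p (x₀ t) (u t) := by
  by_contra! hC
  have hp₁ := one_lt_of_sqrt_three_le hp
  have hne := hu.ne_zero hp₁ hC ht₀
  have hcons := hu.integral_sq_eq_and_integral_energyDensity_eq hp₁ hC hne
  obtain ⟨φ, hφ, hpot⟩ := exists_pos_le_integral_potential hp₁ (integral_sq_pos (hne 0)) C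
  obtain ⟨A, hA⟩ := exists_neg_le_comparison hp₁ (∫ x, u 0 x ^ 2)
    (∫ x, energyDensity p (u 0) x)
  have hgain : ∀ T, 0 ≤ T →
      T * (1 / 2 * (p - 1) ^ 2 * φ ^ 2) ≤ 2 * ((∫ x, density p (u 0) x) * C) := fun T hT =>
    mul_le_of_tendsto_of_intervalIntegral_le hT
      (fun R hR => (((hu.conservationLaw_energy hp₁).continuous_integral_mul_flux
        (contDiff_cutoff R).continuous (hasCompactSupport_cutoff (by linarith))).const_mul _).sub
        (((hu.conservationLaw_mass hp₁).continuous_integral_mul_flux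
        (contDiff_cutoff R).continuous (hasCompactSupport_cutoff (by linarith))).const_mul _))
      (fun R hR t => hA (u t) (hcons t).1 (hcons t).2 R hR)
      (fun R hR => hu.intervalIntegral_comparison_le hp₁ hC hne (by linarith) T)
      (fun t => ((tendsto_integral_cutoff_mul
        (QuadDecay.energyFlux (u t) hp₁).integrable).const_mul _).sub
        ((tendsto_integral_cutoff_mul (QuadDecay.massFlux (u t) hp₁).integrable).const_mul _))
      (fun t => by
        have h := half_mul_sq_integral_potential_le (u t) hp
        rw [(hcons t).1, (hcons t).2] at h
        refine le_trans ?_ h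
        have := hpot (x₀ t) (u t) (hC t) (hcons t).1
        gcongr)
  have hpos : 0 < 1 / 2 * (p - 1) ^ 2 * φ ^ 2 := by
    have := sub_pos.2 hp₁
    positivity
  obtain ⟨n, hn⟩ := exists_nat_gt
    (2 * ((∫ x, density p (u 0) x) * C) / (1 / 2 * (p - 1) ^ 2 * φ ^ 2))
  exact absurd (hgain n n.cast_nonneg) (not_le.2 ((div_lt_iff₀ hpos).1 hn))

end IsSolution

lemma IsSolution.of_deriv {p : ℝ} {u : ℝ → 𝓢(ℝ, ℝ)} (hp : 1 < p)
    (hu : ContDiff ℝ ∞ fun q : ℝ × ℝ => u q.1 q.2)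
    (hpde : ∀ t x, deriv (fun s => u s x) t + iteratedDeriv 3 (u t) x =
      deriv (fun y => nonlin p (u t y)) x) : IsSolution p u where
  contDiff := hu
  hasDerivAt t x := by
    have hdiff : DifferentiableAt ℝ (fun s => u s x) t :=
      (hu.comp (by fun_prop : ContDiff ℝ ∞ fun s : ℝ => (s, x))).differentiable (by simp) t
    have hthird : iteratedDeriv 3 (u t) = ∂ (∂ (∂ (u t))) := by
      simp only [iteratedDeriv_succ, iteratedDeriv_zero]
      rfl
    have hnonlin := ((hasDerivAt_nonlin hp (u t x)).comp x (hasDerivAt_schwartz (u t) x)).deriv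
    refine hdiff.hasDerivAt.congr_deriv ?_
    rw [eq_sub_of_add_eq (hpde t x), hthird, sub_eq_neg_add]
    exact congrArg _ hnonlin

end GKdV

/-- **Tao's dispersion estimate.** For `p ≥ √3` and a nonzero global Schwartz solution `u`
of the defocusing gKdV equation, for any choice of center function `x(t)` the first moment
of the mass density plus energy density about `x(t)` is unbounded in time:
`sup_{t} ∫ |x − x(t)| (ρ(t,x) + e(t,x)) dx = ∞`. -/
theorem tao_dispersion_estimate
    (p : ℝ) (hp : Real.sqrt 3 ≤ p)
    (u : ℝ → ℝ → ℝ)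
    (hsmooth : ContDiff ℝ (⊤ : ℕ∞) (fun q : ℝ × ℝ => u q.1 q.2))
    (hschwartz : ∀ t : ℝ, ∃ f : SchwartzMap ℝ ℝ, ∀ x : ℝ, u t x = f x)
    (hpde : ∀ t x : ℝ,
      deriv (fun s => u s x) t + iteratedDeriv 3 (fun y => u t y) x
        = deriv (fun y => |u t y| ^ (p - 1) * u t y) x)
    (hnz : u ≠ 0)
    (x₀ : ℝ → ℝ) :
    ∀ C : ℝ, ∃ t : ℝ,
      C < ∫ x : ℝ, |x - x₀ t| *
        ((u t x) ^ 2 + ((1 / 2) * (deriv (fun y => u t y) x) ^ 2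
          + |u t x| ^ (p + 1) / (p + 1))) := by
  choose f hf using hschwartz
  obtain rfl : u = fun t x => f t x := funext₂ hf
  obtain ⟨t₀, ht₀⟩ : ∃ t, f t ≠ 0 := by
    by_contra! hzero
    exact hnz (funext₂ fun t x => by simp [hzero t])
  have hsol := GKdV.IsSolution.of_deriv (GKdV.one_lt_of_sqrt_three_le hp) hsmooth hpde
  exact hsol.exists_lt_moment hp ht₀ x₀
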